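/- arXiv:2205.10790 — 8 statements merged into one kernel-verified Lean document; each statement's English description precedes it below -/
import Mathlib

section
/- Let n ≥ 1 be an integer and let f : [0,1] → ℝⁿ be a continuous map that is ℝ-full, i.e. the ℝ-linear span of the image f([0,1]) is all of ℝⁿ. Then for every vector α ∈ ℝⁿ and every ε > 0 there exists a continuous function x : [0,1] → ℝ such that x(0) = x(1) = 0 and ‖∫₀¹ x(s)·f(s) ds − α‖ < ε. -/
open MeasureTheory Set

/-- Claim in the proof of Lemma 3.4, the case `k = 0`.
If `f : [0,1] → ℝⁿ` (`n ≥ 1`) is continuous and ℝ-full (the real linear span of its image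
is all of `ℝⁿ`), then for any `α ∈ ℝⁿ` and any `ε > 0` there is a continuous function
`x : [0,1] → ℝ` with `x 0 = x 1 = 0` and `‖∫₀¹ x(s) • f(s) ds - α‖ < ε`. -/
theorem statement0 (n : ℕ) (hn : 1 ≤ n)
    (f : ℝ → EuclideanSpace ℝ (Fin n))
    (hf : ContinuousOn f (Icc 0 1))
    (hfull : Submodule.span ℝ (f '' Icc 0 1) = ⊤)
    (α : EuclideanSpace ℝ (Fin n)) (ε : ℝ) (hε : 0 < ε) :
    ∃ x : ℝ → ℝ, ContinuousOn x (Icc 0 1) ∧ x 0 = 0 ∧ x 1 = 0 ∧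
      ‖(∫ s in (0:ℝ)..1, x s • f s) - α‖ < ε := by
  classical
  have hint : ∀ x : ℝ → ℝ, ContinuousOn x (Icc 0 1) →
      IntervalIntegrable (fun s => x s • f s) volume 0 1 := fun x hx =>
    (ContinuousOn.smul hx hf).intervalIntegrable_of_Icc zero_le_one
  let V : Submodule ℝ (EuclideanSpace ℝ (Fin n)) :=
    { carrier := {β | ∃ x : ℝ → ℝ, ContinuousOn x (Icc 0 1) ∧ x 0 = 0 ∧ x 1 = 0 ∧
        (∫ s in (0:ℝ)..1, x s • f s) = β}
      zero_mem' := ⟨fun _ => 0, continuousOn_const, rfl, rfl, by simp⟩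
      add_mem' := by
        rintro a b ⟨x, hx, hx0, hx1, rfl⟩ ⟨y, hy, hy0, hy1, rfl⟩
        refine ⟨fun s => x s + y s, hx.add hy, by simp [hx0, hy0], by simp [hx1, hy1], ?_⟩
        simp only [add_smul]
        exact intervalIntegral.integral_add (hint x hx) (hint y hy)
      smul_mem' := by
        rintro c a ⟨x, hx, hx0, hx1, rfl⟩
        refine ⟨fun s => c * x s, continuousOn_const.mul hx, by simp [hx0], by simp [hx1], ?_⟩
        simp only [mul_smul]
        exact intervalIntegral.integral_smul c _ }
  have hV : V = ⊤ := by
    rw [← Submodule.orthogonal_eq_bot_iff, Submodule.eq_bot_iff]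
    intro v hv
    have hg : ContinuousOn (fun s => inner ℝ v (f s)) (Icc (0:ℝ) 1) :=
      continuousOn_const.inner hf
    have hw : ContinuousOn (fun s : ℝ => s * (1 - s)) (Icc (0:ℝ) 1) := by fun_prop
    have hx : ContinuousOn (fun s => s * (1 - s) * inner ℝ v (f s)) (Icc (0:ℝ) 1) := hw.mul hg
    have hmem : (∫ s in (0:ℝ)..1, (s * (1 - s) * inner ℝ v (f s)) • f s) ∈ V :=
      ⟨_, hx, by simp, by simp, rfl⟩
    have h0 := (Submodule.mem_orthogonal' V v).1 hv _ hmem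
    have h1 : (∫ s in (0:ℝ)..1, (s * (1 - s) * inner ℝ v (f s)) * inner ℝ v (f s)) = 0 := by
      refine Eq.trans ?_ h0
      have := (innerSL ℝ v).intervalIntegral_comp_comm (hint _ hx)
      simpa [inner_smul_right] using this
    have h2 : EqOn (fun s => inner ℝ v (f s)) (fun _ => (0:ℝ)) (Ioo 0 1) := by
      intro c hc
      by_contra hne
      have hne' : inner ℝ v (f c) ≠ 0 := hne
      refine (ne_of_gt (intervalIntegral.integral_pos zero_lt_one (hx.mul hg) ?_ ⟨c, ⟨hc.1.le, hc.2.le⟩, ?_⟩)) h1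
      · intro s hs
        have := mul_nonneg (mul_nonneg hs.1.le (sub_nonneg.2 hs.2))
          (mul_self_nonneg (inner ℝ v (f s)))
        simpa [mul_assoc] using this
      · have := mul_pos (mul_pos hc.1 (sub_pos.2 hc.2)) (mul_self_pos.2 hne')
        simpa only [mul_assoc, Pi.mul_apply] using this
    have h3 : EqOn (fun s => inner ℝ v (f s)) (fun _ => (0:ℝ)) (Icc 0 1) :=
      h2.of_subset_closure hg continuousOn_const Ioo_subset_Icc_self
        (by rw [closure_Ioo zero_ne_one])
    have h4 : Submodule.span ℝ (f '' Icc 0 1) ≤ (Submodule.span ℝ {v})ᗮ := by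
      rw [Submodule.span_le]
      rintro _ ⟨s, hs, rfl⟩
      exact Submodule.mem_orthogonal_singleton_iff_inner_right.2 (h3 hs)
    have h5 : v ∈ (Submodule.span ℝ {v})ᗮ := h4 (hfull ▸ Submodule.mem_top)
    exact inner_self_eq_zero.1 (Submodule.mem_orthogonal_singleton_iff_inner_right.1 h5)
  obtain ⟨x, hx, hx0, hx1, h⟩ : α ∈ V := hV ▸ Submodule.mem_top
  exact ⟨x, hx, hx0, hx1, by simpa [h] using hε⟩
end

section
/- Let n ≥ 1 be an integer, let f : [0,1] → ℝⁿ be a continuous map that is ℝ-full, and let α ∈ ℝⁿ. Then there exist points 0 < s₁ < s₂ < ⋯ < sₙ < 1, a number σ > 0 such that the closed intervals [sⱼ − σ, sⱼ + σ] (j = 1, …, n) are pairwise disjoint and contained in (0,1), and real numbers λ₁, …, λₙ, such that the step function x₀ : [0,1] → ℝ defined by x₀(s) = λⱼ for s ∈ [sⱼ − σ, sⱼ + σ] and x₀(s) = 0 otherwise satisfies ∫₀¹ x₀(s)·f(s) ds = α exactly. -/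
open MeasureTheory Set

lemma span_Ioo (n : ℕ) (f : ℝ → EuclideanSpace ℝ (Fin n))
    (hf : ContinuousOn f (Icc 0 1))
    (hfull : Submodule.span ℝ (f '' Icc 0 1) = ⊤) :
    Submodule.span ℝ (f '' Ioo 0 1) = ⊤ := by
  rw [eq_top_iff, ← hfull, Submodule.span_le]
  have h1 : f '' Icc 0 1 ⊆ closure (f '' Ioo 0 1) := by
    have := hf
    rw [← closure_Ioo (zero_ne_one' ℝ)] at this ⊢
    exact this.image_closure
  refine h1.trans (closure_minimal Submodule.subset_span ?_)
  exact Submodule.closed_of_finiteDimensional _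

lemma exists_pts (n : ℕ) (f : ℝ → EuclideanSpace ℝ (Fin n))
    (h : Submodule.span ℝ (f '' Ioo 0 1) = ⊤) :
    ∃ s : Fin n → ℝ, StrictMono s ∧ (∀ j, s j ∈ Ioo (0:ℝ) 1) ∧
      LinearIndependent ℝ (fun j => f (s j)) := by
  obtain ⟨κ, a, ha, hs, hl⟩ := exists_linearIndependent' ℝ (fun t : Ioo (0:ℝ) 1 => f t)
  have hr : range (fun t : Ioo (0:ℝ) 1 => f t) = f '' Ioo 0 1 := by
    ext; simp
  rw [hr, h] at hs
  have : Fintype κ := by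
    have := hl.finite
    exact Fintype.ofFinite κ
  classical
  have hc : Fintype.card κ = n := by
    have b := Module.Basis.mk hl hs.ge
    have := Module.finrank_eq_card_basis b
    simpa using this.symm
  let p : κ → ℝ := fun k => (a k : ℝ)
  have hp : Function.Injective p := Subtype.val_injective.comp ha
  let T : Finset ℝ := Finset.univ.image p
  have hT : T.card = n := by
    rw [Finset.card_image_of_injective _ hp, Finset.card_univ, hc]
  have hm : ∀ j, ∃ k, p k = T.orderEmbOfFin hT j := by
    intro j
    have := T.orderEmbOfFin_mem hT j
    obtain ⟨k, _, hk⟩ := Finset.mem_image.1 this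
    exact ⟨k, hk⟩
  choose e he using hm
  have hei : Function.Injective e := by
    intro i j hij
    apply (T.orderEmbOfFin hT).injective
    rw [← he, ← he, hij]
  refine ⟨T.orderEmbOfFin hT, (T.orderEmbOfFin hT).strictMono, ?_, ?_⟩
  · intro j
    rw [← he]
    exact (a (e j)).2
  · have := hl.comp e hei
    have e2 : (fun j => f (T.orderEmbOfFin hT j)) =
        ((fun t : Ioo (0:ℝ) 1 => f t) ∘ a) ∘ e := by
      funext j
      rw [← he]
      rfl
    rw [e2]
    exact this

open Filter Topology in
lemma avg_close {n : ℕ} (f : ℝ → EuclideanSpace ℝ (Fin n)) (s : ℝ) (hc : ContinuousAt f s)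
    (ε : ℝ) (hε : 0 < ε) (hfi : ∀ᶠ σ in 𝓝[>] (0:ℝ), IntervalIntegrable f volume (s - σ) (s + σ)) :
    ∀ᶠ σ in 𝓝[>] (0:ℝ), ‖(2 * σ)⁻¹ • (∫ t in (s - σ)..(s + σ), f t) - f s‖ ≤ ε := by
  obtain ⟨δ, hδ, H⟩ := Metric.continuousAt_iff.1 hc ε hε
  filter_upwards [Ioo_mem_nhdsGT hδ, hfi] with σ hσ hi
  have h0 : 0 < 2 * σ := by linarith [hσ.1]
  have h1 : ‖∫ t in (s - σ)..(s + σ), (f t - f s)‖ ≤ ε * |(s + σ) - (s - σ)| := by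
    apply intervalIntegral.norm_integral_le_of_norm_le_const
    intro x hx
    rw [uIoc_of_le (by linarith)] at hx
    rw [← dist_eq_norm]
    refine (H ?_).le
    rw [Real.dist_eq, abs_lt]
    constructor <;> linarith [hx.1, hx.2, hσ.2]
  rw [intervalIntegral.integral_sub hi (by simp), intervalIntegral.integral_const] at h1
  have e : (s + σ) - (s - σ) = 2 * σ := by ring
  rw [e, abs_of_pos h0] at h1
  have h2 : (2 * σ)⁻¹ • (∫ t in (s - σ)..(s + σ), f t) - f s
      = (2 * σ)⁻¹ • ((∫ t in (s - σ)..(s + σ), f t) - (2 * σ) • f s) := by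
    rw [smul_sub, smul_smul, inv_mul_cancel₀ h0.ne', one_smul]
  rw [h2, norm_smul, norm_inv, Real.norm_of_nonneg h0.le, inv_mul_le_iff₀ h0]
  linarith

/-- For a continuous ℝ-full map `f : [0,1] → ℝⁿ` and `α ∈ ℝⁿ` there are
points `0 < s₁ < ⋯ < sₙ < 1`, a number `σ > 0` with the intervals `[sⱼ-σ, sⱼ+σ]` pairwise
disjoint and contained in `(0,1)`, and reals `λ₁, …, λₙ` such that the associated step
function `x₀` (equal to `λⱼ` on `[sⱼ-σ, sⱼ+σ]` and `0` elsewhere) satisfies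
`∫₀¹ x₀(s) • f(s) ds = α` exactly. -/
theorem statement2 (n : ℕ) (hn : 1 ≤ n)
    (f : ℝ → EuclideanSpace ℝ (Fin n))
    (hf : ContinuousOn f (Icc 0 1))
    (hfull : Submodule.span ℝ (f '' Icc 0 1) = ⊤)
    (α : EuclideanSpace ℝ (Fin n)) :
    ∃ (s : Fin n → ℝ) (σ : ℝ) (lam : Fin n → ℝ) (x₀ : ℝ → ℝ),
      StrictMono s ∧ 0 < σ ∧
      (∀ j, Icc (s j - σ) (s j + σ) ⊆ Ioo (0:ℝ) 1) ∧
      (Pairwise fun i j => Disjoint (Icc (s i - σ) (s i + σ)) (Icc (s j - σ) (s j + σ))) ∧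
      (∀ j, ∀ t ∈ Icc (s j - σ) (s j + σ), x₀ t = lam j) ∧
      (∀ t, t ∉ ⋃ j, Icc (s j - σ) (s j + σ) → x₀ t = 0) ∧
      (∫ t in (0:ℝ)..1, x₀ t • f t) = α := by
  have hI := span_Ioo n f hf hfull
  obtain ⟨s, hs, hs01, hl⟩ := exists_pts n f hI
  have hopen := (isOpen_setOfPred_linearIndependent (𝕜 := ℝ) (ι := Fin n)
    (E := EuclideanSpace ℝ (Fin n)))
  obtain ⟨ε, hε, hball⟩ := Metric.isOpen_iff.1 hopen _ hl
  have hin : ∀ j, ∀ᶠ σ in nhdsWithin (0:ℝ) (Ioi 0),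
      Icc (s j - σ) (s j + σ) ⊆ Ioo (0:ℝ) 1 := by
    intro j
    obtain ⟨h0, h1⟩ := hs01 j
    filter_upwards [Ioo_mem_nhdsGT h0, Ioo_mem_nhdsGT (sub_pos.2 h1)] with σ a b
    intro x hx
    constructor <;> linarith [hx.1, hx.2, a.2, b.2]
  have hfi : Integrable f (volume.restrict (Icc (0:ℝ) 1)) :=
    hf.integrableOn_compact isCompact_Icc
  have hii : ∀ j σ, 0 < σ → Icc (s j - σ) (s j + σ) ⊆ Ioo (0:ℝ) 1 →
      IntegrableOn f (Icc (s j - σ) (s j + σ)) := by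
    intro j σ _ h
    exact IntegrableOn.mono_set hfi (h.trans Ioo_subset_Icc_self)
  have hclose := fun j => avg_close f (s j)
    (hf.continuousAt (Icc_mem_nhds (hs01 j).1 (hs01 j).2)) (ε / 2) (half_pos hε) (by
      filter_upwards [hin j, self_mem_nhdsWithin] with σ h h0
      have h0 : 0 < σ := h0
      rw [intervalIntegrable_iff_integrableOn_Icc_of_le (by linarith)]
      exact hii j σ h0 h)
  have hgap : ∀ i j, ∀ᶠ σ in nhdsWithin (0:ℝ) (Ioi 0), i < j → 2 * σ < s j - s i := by
    intro i j
    by_cases hij : i < j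
    · have h0 := hs hij
      filter_upwards [Ioo_mem_nhdsGT (half_pos (sub_pos.2 h0))] with σ a _
      linarith [a.2]
    · exact Filter.Eventually.of_forall fun σ h => absurd h hij
  obtain ⟨σ, ⟨⟨hin, hclose⟩, hgap⟩, hσ⟩ :=
    (((Filter.eventually_all.2 hin).and (Filter.eventually_all.2 hclose)).and
      (Filter.eventually_all.2 fun i => Filter.eventually_all.2 (hgap i))).and
      (self_mem_nhdsWithin) |>.exists
  have hσ : 0 < σ := hσ
  have hA : LinearIndependent ℝ
      (fun j => (2 * σ)⁻¹ • (∫ t in (s j - σ)..(s j + σ), f t)) := by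
    apply hball
    rw [Metric.mem_ball]
    refine lt_of_le_of_lt ?_ (half_lt_self hε)
    rw [dist_pi_le_iff (half_pos hε).le]
    intro j
    rw [dist_eq_norm]
    exact hclose j
  have hspan := hA.span_eq_top_of_card_eq_finrank' (by simp)
  have hα : α ∈ Submodule.span ℝ
      (range fun j => (2 * σ)⁻¹ • (∫ t in (s j - σ)..(s j + σ), f t)) := by
    rw [hspan]; trivial
  obtain ⟨c, hc⟩ := (Submodule.mem_span_range_iff_exists_fun ℝ).1 hα
  have hdisj : Pairwise fun i j =>
      Disjoint (Icc (s i - σ) (s i + σ)) (Icc (s j - σ) (s j + σ)) := by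
    intro i j hij
    rw [Set.disjoint_left]
    intro x hx hy
    rcases lt_or_gt_of_ne hij with h | h
    · linarith [hgap i j h, hx.1, hx.2, hy.1, hy.2]
    · linarith [hgap j i h, hx.1, hx.2, hy.1, hy.2]
  refine ⟨s, σ, fun j => c j * (2 * σ)⁻¹,
    fun t => ∑ j, (Icc (s j - σ) (s j + σ)).indicator (fun _ => c j * (2 * σ)⁻¹) t,
    hs, hσ, hin, hdisj, ?_, ?_, ?_⟩
  · intro j t ht
    dsimp only
    rw [Finset.sum_eq_single j]
    · rw [indicator_of_mem ht]
    · intro i _ hij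
      exact indicator_of_notMem (fun hi => Set.disjoint_left.1 (hdisj hij) hi ht) _
    · simp
  · intro t ht
    apply Finset.sum_eq_zero
    intro j _
    exact indicator_of_notMem (fun hj => ht (mem_iUnion.2 ⟨j, hj⟩)) _
  · rw [← hc]
    have e : ∀ t, (∑ j, (Icc (s j - σ) (s j + σ)).indicator
        (fun _ => c j * (2 * σ)⁻¹) t) • f t
        = ∑ j, (Icc (s j - σ) (s j + σ)).indicator (fun t => (c j * (2 * σ)⁻¹) • f t) t := by
      intro t
      rw [Finset.sum_smul]
      refine Finset.sum_congr rfl fun j _ => ?_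
      by_cases h : t ∈ Icc (s j - σ) (s j + σ)
      · rw [indicator_of_mem h, indicator_of_mem h]
      · rw [indicator_of_notMem h, indicator_of_notMem h, zero_smul]
    simp only [e]
    rw [intervalIntegral.integral_of_le zero_le_one, integral_finsetSum]
    · refine Finset.sum_congr rfl fun j _ => ?_
      rw [setIntegral_indicator measurableSet_Icc,
        inter_eq_self_of_subset_right ((hin j).trans Ioo_subset_Ioc_self),
        integral_smul, integral_Icc_eq_integral_Ioc,
        ← intervalIntegral.integral_of_le (by linarith), smul_smul]
    · intro j _
      refine Integrable.integrableOn ?_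
      rw [integrable_indicator_iff measurableSet_Icc]
      exact (hii j σ hσ (hin j)).smul (c j * (2 * σ)⁻¹)
end

section
/- Let k and n be positive integers, set P = [0,1]ᵏ, and let f : P × [0,1] → ℝⁿ and α : P → ℝⁿ be continuous maps. Assume that for every p ∈ P the path f_p := f(p, ·) : [0,1] → ℝⁿ is ℝ-full, i.e. the ℝ-linear span of f_p([0,1]) equals ℝⁿ. Then for every ε > 0 there exists a continuous function x : P × [0,1] → ℝ such that x(p, 0) = x(p, 1) = 0 for all p ∈ P, and ‖∫₀¹ x(p,s)·f(p,s) ds − α(p)‖ < ε for all p ∈ P. -/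
open MeasureTheory Set

/-- Lemma 3.3, main part. Let `P = [0,1]ᵏ` and let
`f : P × [0,1] → ℝⁿ` and `α : P → ℝⁿ` be continuous, with each path `f_p = f(p,·)`
ℝ-full. Then for every `ε > 0` there is a continuous `x : P × [0,1] → ℝ` with
`x(p,0) = x(p,1) = 0` and `‖∫₀¹ x(p,s) • f(p,s) ds - α(p)‖ < ε` for all `p ∈ P`. -/
theorem statement3 (k n : ℕ) (hk : 0 < k) (hn : 0 < n)
    (f : (Fin k → ℝ) → ℝ → EuclideanSpace ℝ (Fin n))
    (α : (Fin k → ℝ) → EuclideanSpace ℝ (Fin n))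
    (hf : ContinuousOn (fun q : (Fin k → ℝ) × ℝ => f q.1 q.2)
      (Icc (0 : Fin k → ℝ) 1 ×ˢ Icc (0:ℝ) 1))
    (hα : ContinuousOn α (Icc (0 : Fin k → ℝ) 1))
    (hfull : ∀ p ∈ Icc (0 : Fin k → ℝ) 1, Submodule.span ℝ (f p '' Icc (0:ℝ) 1) = ⊤)
    (ε : ℝ) (hε : 0 < ε) :
    ∃ x : (Fin k → ℝ) → ℝ → ℝ,
      ContinuousOn (fun q : (Fin k → ℝ) × ℝ => x q.1 q.2)
        (Icc (0 : Fin k → ℝ) 1 ×ˢ Icc (0:ℝ) 1) ∧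
      (∀ p ∈ Icc (0 : Fin k → ℝ) 1, x p 0 = 0 ∧ x p 1 = 0) ∧
      (∀ p ∈ Icc (0 : Fin k → ℝ) 1,
        ‖(∫ s in (0:ℝ)..1, x p s • f p s) - α p‖ < ε) := by
  have hcont_c : Continuous (fun p : Fin k → ℝ => (0 : Fin k → ℝ) ⊔ (1 ⊓ p)) := by
    refine continuous_pi fun i => ?_
    have : Continuous (fun p : Fin k → ℝ => (0 : ℝ) ⊔ (1 ⊓ p i)) := by fun_prop
    exact this
  have hcont_d : Continuous (fun t : ℝ => (0 : ℝ) ⊔ (1 ⊓ t)) := by fun_prop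
  have hc : ∀ p : Fin k → ℝ, (0 : Fin k → ℝ) ⊔ (1 ⊓ p) ∈ Icc (0 : Fin k → ℝ) 1 := fun p =>
    ⟨le_sup_left, sup_le zero_le_one inf_le_left⟩
  have hd : ∀ t : ℝ, (0 : ℝ) ⊔ (1 ⊓ t) ∈ Icc (0 : ℝ) 1 := fun p =>
    ⟨le_sup_left, sup_le zero_le_one inf_le_left⟩
  obtain ⟨F, hF, hFf⟩ : ∃ F : (Fin k → ℝ) → ℝ → EuclideanSpace ℝ (Fin n),
      Continuous (fun q : (Fin k → ℝ) × ℝ => F q.1 q.2) ∧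
      ∀ p ∈ Icc (0 : Fin k → ℝ) 1, ∀ s ∈ Icc (0:ℝ) 1, F p s = f p s := by
    refine ⟨fun p s => f (0 ⊔ (1 ⊓ p)) (0 ⊔ (1 ⊓ s)), ?_, ?_⟩
    · exact hf.comp_continuous
        (f := fun q : (Fin k → ℝ) × ℝ => ((0 : Fin k → ℝ) ⊔ (1 ⊓ q.1), (0 : ℝ) ⊔ (1 ⊓ q.2)))
        ((hcont_c.comp continuous_fst).prodMk (hcont_d.comp continuous_snd))
        (fun q => ⟨hc q.1, hd q.2⟩)
    · intro p hp s hs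
      simp only [inf_eq_right.2 hp.2, inf_eq_right.2 hs.2, sup_eq_right.2 hp.1,
        sup_eq_right.2 hs.1]
  let K : (Fin k → ℝ) → ℝ → (EuclideanSpace ℝ (Fin n) →L[ℝ] EuclideanSpace ℝ (Fin n)) :=
    fun p s => (s * (1 - s)) • (innerSL ℝ (F p s)).smulRight (F p s)
  have hK : Continuous (fun q : (Fin k → ℝ) × ℝ => K q.1 q.2) := by
    have h1 : Continuous (fun q : (Fin k → ℝ) × ℝ =>
        ContinuousLinearMap.smulRightL ℝ _ _ (innerSL ℝ (F q.1 q.2)) (F q.1 q.2)) := by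
      fun_prop
    have h2 : Continuous (fun q : (Fin k → ℝ) × ℝ => q.2 * (1 - q.2)) := by fun_prop
    exact h2.smul h1
  let G : (Fin k → ℝ) → (EuclideanSpace ℝ (Fin n) →L[ℝ] EuclideanSpace ℝ (Fin n)) :=
    fun p => ∫ s in (0:ℝ)..1, K p s
  have hG : Continuous G :=
    intervalIntegral.continuous_parametric_intervalIntegral_of_continuous' hK 0 1
  have hKp : ∀ p, Continuous (K p) := fun p => hK.comp (by fun_prop : Continuous fun s => (p, s))
  have hFp : ∀ p, Continuous (F p) := fun p => hF.comp (by fun_prop : Continuous fun s => (p, s))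
  have hGv : ∀ p v, G p v = ∫ s in (0:ℝ)..1, (s * (1 - s) * inner ℝ (F p s) v) • F p s := by
    intro p v
    have := ContinuousLinearMap.intervalIntegral_apply
      ((hKp p).intervalIntegrable (μ := volume) 0 1) v
    rw [this]
    simp [K, smul_smul]
  have hker : ∀ p ∈ Icc (0 : Fin k → ℝ) 1, ∀ v, G p v = 0 → v = 0 := by
    intro p hp v hv
    have hFv : Continuous fun s => inner ℝ (F p s) v := (hFp p).inner continuous_const
    have hI : ∫ s in (0:ℝ)..1, s * (1 - s) * (inner ℝ (F p s) v) ^ 2 = 0 := by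
      have h1 := (innerSL ℝ v).intervalIntegral_comp_comm
        (f := fun s => (s * (1 - s) * inner ℝ (F p s) v) • F p s) (μ := volume) (a := 0) (b := 1)
        (Continuous.intervalIntegrable (by have := hFp p; fun_prop) 0 1)
      rw [← hGv, hv, map_zero] at h1
      rw [← h1]
      congr 1
      ext s
      simp only [innerSL_apply_apply, inner_smul_right, real_inner_comm]
      rw [real_inner_comm]
      ring
    have hz : ∀ s ∈ Ioo (0:ℝ) 1, inner ℝ (F p s) v = 0 := by
      intro s hs
      by_contra hne
      have : 0 < ∫ s in (0:ℝ)..1, s * (1 - s) * (inner ℝ (F p s) v) ^ 2 := by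
        refine intervalIntegral.integral_pos zero_lt_one (by fun_prop) ?_
          ⟨s, Ioo_subset_Icc_self hs, ?_⟩
        · intro t ht
          exact mul_nonneg (mul_nonneg ht.1.le (sub_nonneg.2 ht.2)) (sq_nonneg _)
        · exact mul_pos (mul_pos hs.1 (sub_pos.2 hs.2)) (by positivity)
      exact this.ne' hI
    have hz' : Icc (0:ℝ) 1 ⊆ {s | inner ℝ (F p s) v = 0} := by
      rw [← closure_Ioo (zero_ne_one (α := ℝ))]
      exact closure_minimal hz (isClosed_eq hFv continuous_const)
    have hsp : Submodule.span ℝ (f p '' Icc (0:ℝ) 1) ≤ LinearMap.ker (innerSL ℝ v).toLinearMap := by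
      rw [Submodule.span_le]
      rintro _ ⟨s, hs, rfl⟩
      have := hz' hs
      simp only [mem_ofPred_eq, hFf p hp s hs] at this
      simpa [real_inner_comm] using this
    rw [hfull p hp] at hsp
    have : v ∈ LinearMap.ker (innerSL ℝ v).toLinearMap := hsp trivial
    simpa using this
  have hunit : ∀ p ∈ Icc (0 : Fin k → ℝ) 1, IsUnit (G p) := by
    intro p hp
    have hinj : Function.Injective (G p).toLinearMap :=
      (injective_iff_map_eq_zero _).2 (hker p hp)
    let e := (LinearEquiv.ofInjectiveEndo (G p).toLinearMap hinj).toContinuousLinearEquiv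
    refine ⟨ContinuousLinearEquiv.toUnit e, ?_⟩
    ext1 v
    rfl
  let V : (Fin k → ℝ) → EuclideanSpace ℝ (Fin n) := fun p => Ring.inverse (G p) (α p)
  have hV : ContinuousOn V (Icc (0 : Fin k → ℝ) 1) := by
    refine ContinuousOn.clm_apply ?_ hα
    intro p hp
    obtain ⟨u, hu⟩ := hunit p hp
    have h1 : ContinuousAt Ring.inverse (G p) := hu ▸ NormedRing.inverse_continuousAt u
    exact (ContinuousAt.comp (f := G) h1 hG.continuousAt).continuousWithinAt
  refine ⟨fun p s => s * (1 - s) * inner ℝ (F p s) (V p), ?_, fun p _ => by simp, ?_⟩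
  · have h1 : ContinuousOn (fun q : (Fin k → ℝ) × ℝ => V q.1)
        (Icc (0 : Fin k → ℝ) 1 ×ˢ Icc (0:ℝ) 1) :=
      hV.comp continuous_fst.continuousOn (fun q hq => hq.1)
    have h2 : Continuous (fun q : (Fin k → ℝ) × ℝ => q.2 * (1 - q.2)) := by fun_prop
    exact h2.continuousOn.mul (hF.continuousOn.inner h1)
  · intro p hp
    have h1 : (∫ s in (0:ℝ)..1, (s * (1 - s) * inner ℝ (F p s) (V p)) • f p s) = G p (V p) := by
      rw [hGv]
      refine intervalIntegral.integral_congr fun s hs => ?_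
      rw [uIcc_of_le zero_le_one] at hs
      simp only [hFf p hp s hs]
    have h2 : G p (V p) = α p := by
      have := Ring.mul_inverse_cancel (G p) (hunit p hp)
      exact congrArg (fun T : EuclideanSpace ℝ (Fin n) →L[ℝ] EuclideanSpace ℝ (Fin n) => T (α p)) this
    rw [h1, h2]
    simpa using hε
end

section
/- Let k and n be positive integers, set P = [0,1]ᵏ and Q = [0,1]^{k−1} × {0} ⊂ P, and let f : P × [0,1] → ℝⁿ and α : P → ℝⁿ be continuous maps. Assume that for every p ∈ P the path f_p := f(p, ·) : [0,1] → ℝⁿ is ℝ-full, and assume in addition that α(p) = 0 for all p ∈ Q. Then for every ε > 0 there exists a continuous function x : P × [0,1] → ℝ such that x(p, 0) = x(p, 1) = 0 for all p ∈ P, x(p, s) = 0 for all p ∈ Q and all s ∈ [0,1], and ‖∫₀¹ x(p,s)·f(p,s) ds − α(p)‖ < ε for all p ∈ P. -/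
open MeasureTheory Set

theorem gram_unit_aux {n : ℕ} (g : ℝ → EuclideanSpace ℝ (Fin n)) (hg : Continuous g)
    (hfull : Submodule.span ℝ (g '' Icc (0:ℝ) 1) = ⊤) :
    IsUnit (∫ s in (0:ℝ)..1, (s * (1 - s)) • (innerSL ℝ (g s)).smulRight (g s)) := by
  have hc : Continuous fun s : ℝ => (s * (1 - s)) • (innerSL ℝ (g s)).smulRight (g s) := by
    fun_prop
  rw [ContinuousLinearMap.isUnit_iff_bijective]
  set G := ∫ s in (0:ℝ)..1, (s * (1 - s)) • (innerSL ℝ (g s)).smulRight (g s) with hG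
  have hinj : Function.Injective (G : EuclideanSpace ℝ (Fin n) →ₗ[ℝ] EuclideanSpace ℝ (Fin n)) := by
    rw [injective_iff_map_eq_zero]
    intro v hv
    have hv' : G v = 0 := hv
    have h1 : inner ℝ v (G v) = ∫ s in (0:ℝ)..1, (s * (1 - s)) * (inner ℝ (g s) v) ^ 2 := by
      rw [hG, ContinuousLinearMap.intervalIntegral_apply (hc.intervalIntegrable _ _),
        ← innerSL_apply_apply ℝ, ← ContinuousLinearMap.intervalIntegral_comp_comm]
      · refine intervalIntegral.integral_congr fun s _ => ?_
        simp [real_inner_comm (g s) v]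
        ring_nf
        simp
      · apply Continuous.intervalIntegrable
        fun_prop
    rw [hv', inner_zero_right] at h1
    have hzero : ∀ s ∈ Ioo (0:ℝ) 1, inner ℝ (g s) v = 0 := by
      intro s hs
      by_contra hne
      have : 0 < ∫ s in (0:ℝ)..1, (s * (1 - s)) * (inner ℝ (g s) v) ^ 2 := by
        apply intervalIntegral.integral_pos one_pos
        · fun_prop
        · intro t ht
          have : 0 ≤ 1 - t := by linarith [ht.2]
          have := ht.1
          positivity
        · refine ⟨s, ⟨hs.1.le, hs.2.le⟩, ?_⟩
          have : 0 < 1 - s := by linarith [hs.2]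
          have := hs.1
          positivity
      linarith
    have hzero' : ∀ s ∈ Icc (0:ℝ) 1, inner ℝ (g s) v = 0 := by
      have hcl : IsClosed {s : ℝ | inner ℝ (g s) v = 0} :=
        isClosed_eq (by fun_prop) continuous_const
      have := hcl.closure_subset_iff.2 (show Ioo (0:ℝ) 1 ⊆ _ from hzero)
      rwa [closure_Ioo zero_ne_one] at this
    have hspan : ∀ u ∈ Submodule.span ℝ (g '' Icc (0:ℝ) 1), inner ℝ u v = 0 := by
      intro u hu
      induction hu using Submodule.span_induction with
      | mem x hx =>
        obtain ⟨s, hs, rfl⟩ := hx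
        exact hzero' s hs
      | zero => simp
      | add x y _ _ hx hy => rw [inner_add_left, hx, hy, add_zero]
      | smul a x _ hx => rw [inner_smul_left, hx, mul_zero]
    have := hspan v (by rw [hfull]; trivial)
    exact inner_self_eq_zero.1 this
  exact ⟨hinj, LinearMap.injective_iff_surjective.1 hinj⟩

/-- Lemma 3.3, addendum. Let `P = [0,1]ᵏ` and
`Q = [0,1]^{k-1} × {0} ⊂ P` (the points of `P` whose last coordinate vanishes), and let
`f : P × [0,1] → ℝⁿ` and `α : P → ℝⁿ` be continuous with each path `f_p` ℝ-full and
`α(p) = 0` for all `p ∈ Q`. Then for every `ε > 0` there is a continuous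
`x : P × [0,1] → ℝ` with `x(p,0) = x(p,1) = 0` for all `p ∈ P`, with `x(p,s) = 0` for all
`p ∈ Q` and `s ∈ [0,1]`, and `‖∫₀¹ x(p,s) • f(p,s) ds - α(p)‖ < ε` for all `p ∈ P`. -/
theorem statement4 (k n : ℕ) (hk : 0 < k) (hn : 0 < n)
    (f : (Fin k → ℝ) → ℝ → EuclideanSpace ℝ (Fin n))
    (α : (Fin k → ℝ) → EuclideanSpace ℝ (Fin n))
    (hf : ContinuousOn (fun q : (Fin k → ℝ) × ℝ => f q.1 q.2)
      (Icc (0 : Fin k → ℝ) 1 ×ˢ Icc (0:ℝ) 1))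
    (hα : ContinuousOn α (Icc (0 : Fin k → ℝ) 1))
    (hfull : ∀ p ∈ Icc (0 : Fin k → ℝ) 1, Submodule.span ℝ (f p '' Icc (0:ℝ) 1) = ⊤)
    (hαQ : ∀ p ∈ Icc (0 : Fin k → ℝ) 1, p ⟨k - 1, by omega⟩ = 0 → α p = 0)
    (ε : ℝ) (hε : 0 < ε) :
    ∃ x : (Fin k → ℝ) → ℝ → ℝ,
      ContinuousOn (fun q : (Fin k → ℝ) × ℝ => x q.1 q.2)
        (Icc (0 : Fin k → ℝ) 1 ×ˢ Icc (0:ℝ) 1) ∧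
      (∀ p ∈ Icc (0 : Fin k → ℝ) 1, x p 0 = 0 ∧ x p 1 = 0) ∧
      (∀ p ∈ Icc (0 : Fin k → ℝ) 1, p ⟨k - 1, by omega⟩ = 0 →
        ∀ s ∈ Icc (0:ℝ) 1, x p s = 0) ∧
      (∀ p ∈ Icc (0 : Fin k → ℝ) 1,
        ‖(∫ s in (0:ℝ)..1, x p s • f p s) - α p‖ < ε) := by
  set F : (Fin k → ℝ) → ℝ → EuclideanSpace ℝ (Fin n) :=
    fun p s => f (fun i => max 0 (min 1 (p i))) (max 0 (min 1 s)) with hF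
  have hr : ∀ p : Fin k → ℝ, (fun i => max 0 (min 1 (p i))) ∈ Icc (0 : Fin k → ℝ) 1 := by
    intro p
    exact ⟨fun i => le_max_left _ _, fun i => max_le zero_le_one (min_le_left _ _)⟩
  have hr1 : ∀ s : ℝ, max 0 (min 1 s) ∈ Icc (0:ℝ) 1 := fun s =>
    ⟨le_max_left _ _, max_le zero_le_one (min_le_left _ _)⟩
  have hs1 : ∀ s ∈ Icc (0:ℝ) 1, max 0 (min 1 s) = s := fun s hs => by
    rw [min_eq_right hs.2, max_eq_right hs.1]
  have hFc : Continuous fun q : (Fin k → ℝ) × ℝ => F q.1 q.2 := by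
    refine hf.comp_continuous
      (f := fun q : (Fin k → ℝ) × ℝ => ((fun i => max 0 (min 1 (q.1 i))), max 0 (min 1 q.2)))
      (by fun_prop) fun q => ⟨hr _, hr1 _⟩
  have hFeq : ∀ p ∈ Icc (0 : Fin k → ℝ) 1, ∀ s ∈ Icc (0:ℝ) 1, F p s = f p s := by
    intro p hp s hs
    have : (fun i => max 0 (min 1 (p i))) = p := funext fun i => hs1 _ ⟨hp.1 i, hp.2 i⟩
    simp only [hF, this, hs1 s hs]
  have hFfull : ∀ p, Submodule.span ℝ (F p '' Icc (0:ℝ) 1) = ⊤ := by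
    intro p
    rw [← hfull _ (hr p)]
    congr 1
    exact image_congr fun s hs => by simp only [hF, hs1 s hs]
  have hFp : ∀ p, Continuous (F p) := fun p => hFc.comp (Continuous.prodMk_right p)
  set G : (Fin k → ℝ) → EuclideanSpace ℝ (Fin n) →L[ℝ] EuclideanSpace ℝ (Fin n) :=
    fun p => ∫ s in (0:ℝ)..1, (s * (1 - s)) • (innerSL ℝ (F p s)).smulRight (F p s) with hG
  have hGu : ∀ p, IsUnit (G p) := fun p => gram_unit_aux (F p) (hFp p) (hFfull p)
  have hGc : Continuous G := by
    apply intervalIntegral.continuous_parametric_intervalIntegral_of_continuous'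
    simp only [Function.uncurry_def]
    fun_prop
  have hGi : Continuous fun p => Ring.inverse (G p) := by
    rw [continuous_iff_continuousAt]
    intro p
    obtain ⟨u, hu⟩ := hGu p
    have := NormedRing.inverse_continuousAt u
    rw [hu] at this
    exact ContinuousAt.comp (f := G) this hGc.continuousAt
  refine ⟨fun p s => (s * (1 - s)) * inner ℝ (F p s) (Ring.inverse (G p) (α p)), ?_, ?_, ?_, ?_⟩
  · have h1 : ContinuousOn (fun q : (Fin k → ℝ) × ℝ => α q.1)
        (Icc (0 : Fin k → ℝ) 1 ×ˢ Icc (0:ℝ) 1) :=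
      hα.comp continuousOn_fst fun q hq => hq.1
    have h2 : ContinuousOn (fun q : (Fin k → ℝ) × ℝ => Ring.inverse (G q.1))
        (Icc (0 : Fin k → ℝ) 1 ×ˢ Icc (0:ℝ) 1) := (hGi.comp continuous_fst).continuousOn
    have h3 : ContinuousOn (fun q : (Fin k → ℝ) × ℝ => q.2 * (1 - q.2))
        (Icc (0 : Fin k → ℝ) 1 ×ˢ Icc (0:ℝ) 1) := by fun_prop
    exact h3.mul (ContinuousOn.inner hFc.continuousOn (h2.clm_apply h1))
  · intro p _
    simp
  · intro p hp hp0 s _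
    simp [hαQ p hp hp0]
  · intro p hp
    have key : ∫ s in (0:ℝ)..1,
        ((s * (1 - s)) * inner ℝ (F p s) (Ring.inverse (G p) (α p))) • f p s = α p := by
      have hpc := hFp p
      have e1 : G p (Ring.inverse (G p) (α p)) = α p := by
        rw [← mul_apply_eq_comp, Ring.mul_inverse_cancel _ (hGu p)]
        rfl
      refine Eq.trans ?_ e1
      generalize Ring.inverse (G p) (α p) = v
      rw [hG, ContinuousLinearMap.intervalIntegral_apply
        (Continuous.intervalIntegrable (by fun_prop) _ _)]
      refine intervalIntegral.integral_congr fun s hs => ?_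
      rw [uIcc_of_le zero_le_one] at hs
      simp [← hFeq p hp s hs, mul_smul]
    simp only [key, sub_self, norm_zero]
    exact hε
end

section
/- Let n ≥ 1 be an integer, let T be a compact topological space, let X be a topological space, and let f : T × X → ℂⁿ be a continuous map such that for every t ∈ T the ℝ-linear span of the image f({t} × X) is all of ℂⁿ (regarded as a real vector space of real dimension 2n). Then there exists a finite subset Λ ⊆ X such that for every t ∈ T the ℝ-linear span of the finite set {f(t, x) : x ∈ Λ} is all of ℂⁿ. -/
/-- compactness argument in the proof of Lemma 2.2. Let `T` be a compact
topological space, `X` a topological space, and `f : T × X → ℂⁿ` (`n ≥ 1`) a continuous map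
such that for every `t ∈ T` the real linear span of `f({t} × X)` is all of `ℂⁿ` (viewed as a
real vector space). Then there is a finite set `Λ ⊆ X` such that for every `t ∈ T` the real
linear span of `{f(t,x) : x ∈ Λ}` is all of `ℂⁿ`. -/
theorem statement5 (n : ℕ) (hn : 1 ≤ n)
    (T X : Type*) [TopologicalSpace T] [CompactSpace T] [TopologicalSpace X]
    (f : T × X → EuclideanSpace ℂ (Fin n)) (hf : Continuous f)
    (hfull : ∀ t : T, Submodule.span ℝ (Set.range fun x : X => f (t, x)) = ⊤) :
    ∃ Λ : Finset X, ∀ t : T,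
      Submodule.span ℝ ((fun x : X => f (t, x)) '' ↑Λ) = ⊤ := by
  classical
  have hfd : FiniteDimensional ℝ (EuclideanSpace ℂ (Fin n)) :=
    FiniteDimensional.trans ℝ ℂ (EuclideanSpace ℂ (Fin n))
  have key : ∀ t : T, ∃ L : Finset X, ∀ᶠ s in nhds t,
      Submodule.span ℝ ((fun x : X => f (s, x)) '' (L : Set X)) = ⊤ := by
    intro t
    obtain ⟨κ, a, -, hspan, hli⟩ := exists_linearIndependent' ℝ (fun x : X => f (t, x))
    have hfin : Finite κ := hli.finite
    have := Fintype.ofFinite κ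
    rw [hfull t] at hspan
    have hcard : Fintype.card κ = Module.finrank ℝ (EuclideanSpace ℂ (Fin n)) := by
      rw [← finrank_span_eq_card hli, hspan, finrank_top]
    refine ⟨Finset.univ.image a, ?_⟩
    have hc : Continuous (fun s : T => fun k : κ => f (s, a k)) := by fun_prop
    have hev := (hc.tendsto t).eventually (LinearIndependent.eventually (𝕜 := ℝ) hli)
    filter_upwards [hev] with s hs
    have h2 := hs.span_eq_top_of_card_eq_finrank' hcard
    rw [← h2]
    congr 1
    ext y
    simp
  choose L hL using key
  obtain ⟨S, -, hS⟩ := isCompact_univ.elim_nhds_subcover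
    (fun t => {s : T | Submodule.span ℝ ((fun x : X => f (s, x)) '' (L t : Set X)) = ⊤})
    (fun t _ => hL t)
  refine ⟨S.biUnion L, fun t => ?_⟩
  have ht := hS (Set.mem_univ t)
  simp only [Set.mem_iUnion] at ht
  obtain ⟨u, hu, hut⟩ := ht
  rw [eq_top_iff, ← (show _ = _ from hut)]
  apply Submodule.span_mono
  apply Set.image_mono
  exact_mod_cast Finset.subset_biUnion_of_mem L hu
end

section
/- Let k and n be positive integers, set P = [0,1]ᵏ, and let f : P × [0,1] → ℂⁿ and α : P → ℂⁿ be continuous maps. Assume there are two nondegenerate closed intervals J and J′ with J ∩ J′ = ∅ and J ∪ J′ ⊂ (0,1) such that for every p ∈ P the path f_p := f(p, ·) : [0,1] → ℂⁿ is ℂ-full on J (the ℂ-linear span of f_p(J) equals ℂⁿ) and ℝ-full on J′ (the ℝ-linear span of f_p(J′) equals ℂⁿ as a real vector space). Then for every σ > 0 there exists a continuous function h : P × [0,1] → ℂ \ {0} such that h(p, 0) = h(p, 1) = 1 for all p ∈ P, |Re(h(p,s)) − 1| < σ for all (p,s) ∈ P × [0,1] (in particular Re(h) > 0 everywhere), and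 ∫₀¹ h(p,s)·f(p,s) ds = α(p) exactly for all p ∈ P. -/
open MeasureTheory Set


lemma real_solve {X : Type*} [TopologicalSpace X] [FirstCountableTopology X] (n : ℕ)
    (F : X → ℝ → EuclideanSpace ℂ (Fin n)) (hF : Continuous (fun q : X × ℝ => F q.1 q.2))
    (β : X → EuclideanSpace ℂ (Fin n)) (hβ : Continuous β)
    (hfull : ∀ p, Submodule.span ℝ (F p '' Ioo (0:ℝ) 1) = ⊤) :
    ∃ u : X → ℝ → ℝ, Continuous (fun q : X × ℝ => u q.1 q.2) ∧
      (∀ p, u p 0 = 0 ∧ u p 1 = 0) ∧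
      ∀ p, (∫ s in (0:ℝ)..1, u p s • F p s) = β p := by
  let R : EuclideanSpace ℂ (Fin n) → (EuclideanSpace ℂ (Fin n) →L[ℝ] ℝ) := fun v =>
    Complex.reCLM.comp ((innerSL ℂ v).restrictScalars ℝ)
  have hR : Continuous R := by
    have h1 : Continuous fun v : EuclideanSpace ℂ (Fin n) =>
        (innerSL ℂ v).restrictScalars ℝ :=
      (ContinuousLinearMap.restrictScalarsL ℂ (EuclideanSpace ℂ (Fin n)) ℂ ℝ ℝ).continuous.comp
        (innerSL ℂ).continuous
    exact continuous_const.clm_comp h1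
  let T : X → ℝ → (EuclideanSpace ℂ (Fin n) →L[ℝ] EuclideanSpace ℂ (Fin n)) := fun p s =>
    (s * (1 - s)) • (R (F p s)).smulRight (F p s)
  have hT : Continuous (fun q : X × ℝ => T q.1 q.2) := by
    have h2 : Continuous fun q : X × ℝ => (R (F q.1 q.2)).smulRight (F q.1 q.2) :=
      (((ContinuousLinearMap.smulRightL ℝ (EuclideanSpace ℂ (Fin n))
        (EuclideanSpace ℂ (Fin n))).continuous.comp (hR.comp hF))).clm_apply hF
    exact (by fun_prop : Continuous fun q : X × ℝ => q.2 * (1 - q.2)).smul h2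
  let G : X → (EuclideanSpace ℂ (Fin n) →L[ℝ] EuclideanSpace ℂ (Fin n)) := fun p =>
    ∫ s in (0:ℝ)..1, T p s
  have hG : Continuous G :=
    intervalIntegral.continuous_parametric_intervalIntegral_of_continuous' hT 0 1
  have hTp : ∀ p, Continuous (T p) := fun p => hT.comp (by fun_prop : Continuous fun s : ℝ => (p, s))
  have hFp : ∀ p, Continuous (F p) := fun p => hF.comp (by fun_prop : Continuous fun s : ℝ => (p, s))
  have hGapp : ∀ p w, G p w = ∫ s in (0:ℝ)..1, (s * (1 - s) * R (F p s) w) • F p s := by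
    intro p w
    rw [ContinuousLinearMap.intervalIntegral_apply ((hTp p).intervalIntegrable _ _)]
    simp [T, smul_smul]
  have hinj : ∀ p, Function.Injective (G p) := by
    intro p
    rw [injective_iff_map_eq_zero]
    intro w hw
    -- the quadratic form
    have hc : Continuous fun s => R (F p s) w := (hR.comp (hFp p)).clm_apply continuous_const
    have hRs : ∀ v, R v w = R w v := by
      intro v
      change (inner ℂ v w).re = (inner ℂ w v).re
      exact inner_re_symm (𝕜 := ℂ) v w
    have hq : ∫ s in (0:ℝ)..1, s * (1 - s) * R (F p s) w ^ 2 = 0 := by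
      have h3 : R w (G p w) = 0 := by rw [hw]; simp
      rw [hGapp, ← ContinuousLinearMap.intervalIntegral_comp_comm] at h3
      · rw [← h3]
        congr 1
        ext s
        rw [map_smul, ← hRs, smul_eq_mul]; ring
      · exact (((by fun_prop : Continuous fun s : ℝ => s * (1 - s)).mul hc).smul
          (hFp p)).intervalIntegrable _ _
    have hz : ∀ s ∈ Ioo (0:ℝ) 1, R (F p s) w = 0 := by
      intro s hs
      by_contra hne
      have hpos : 0 < ∫ s in (0:ℝ)..1, s * (1 - s) * R (F p s) w ^ 2 := by
        apply intervalIntegral.integral_pos (by norm_num)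
        · exact ((by fun_prop : Continuous fun s : ℝ => s * (1 - s)).mul (hc.pow 2)).continuousOn
        · intro x hx
          have : 0 ≤ 1 - x := by linarith [hx.2]
          have := hx.1.le
          positivity
        · refine ⟨s, ⟨hs.1.le, hs.2.le⟩, ?_⟩
          have : 0 < 1 - s := by linarith [hs.2]
          have := hs.1
          positivity
      exact hpos.ne' hq
    have hle : Submodule.span ℝ (F p '' Ioo (0:ℝ) 1) ≤ LinearMap.ker (R w : EuclideanSpace ℂ (Fin n) →ₗ[ℝ] ℝ) := by
      rw [Submodule.span_le]
      rintro _ ⟨s, hs, rfl⟩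
      have := hz s hs
      rw [hRs] at this
      exact this
    rw [hfull p] at hle
    have hww : R w w = 0 := hle (Submodule.mem_top : w ∈ ⊤)
    change (inner ℂ w w).re = 0 at hww
    have h4 : RCLike.re (inner ℂ w w) = 0 := hww
    rw [inner_self_eq_norm_sq] at h4
    simpa using h4
  have hunit : ∀ p, IsUnit (G p) := by
    intro p
    rw [ContinuousLinearMap.isUnit_iff_bijective]
    have h5 : Function.Injective (G p : EuclideanSpace ℂ (Fin n) →ₗ[ℝ] EuclideanSpace ℂ (Fin n)) := hinj p
    exact ⟨h5, LinearMap.injective_iff_surjective.1 h5⟩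
  let w : X → EuclideanSpace ℂ (Fin n) := fun p => Ring.inverse (G p) (β p)
  have hwc : Continuous w := by
    refine Continuous.clm_apply ?_ hβ
    rw [continuous_iff_continuousAt]
    intro p
    obtain ⟨U, hU⟩ := hunit p
    have h6 := NormedRing.inverse_continuousAt U
    rw [hU] at h6
    exact ContinuousAt.comp (f := G) h6 hG.continuousAt
  refine ⟨fun p s => s * (1 - s) * R (F p s) (w p), ?_, by simp, ?_⟩
  · exact (by fun_prop : Continuous fun q : X × ℝ => q.2 * (1 - q.2)).mul
      ((hR.comp hF).clm_apply (hwc.comp continuous_fst))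
  · intro p
    rw [← hGapp]
    change (G p * Ring.inverse (G p)) (β p) = β p
    rw [Ring.mul_inverse_cancel _ (hunit p)]
    rfl

/-- Corollary 3.5, with the quantitative bound on the real part.
Let `P = [0,1]ᵏ`, and let `f : P × [0,1] → ℂⁿ` and `α : P → ℂⁿ` be continuous. Assume that
there are disjoint nondegenerate closed intervals `J = [a,b]` and `J' = [c,d]` contained in
`(0,1)` such that each path `f_p` is ℂ-full on `J` and ℝ-full on `J'`. Then for every
`σ > 0` there is a continuous nowhere-vanishing `h : P × [0,1] → ℂ*` with
`h(p,0) = h(p,1) = 1`, `|Re h - 1| < σ` everywhere, and `∫₀¹ h(p,s) • f(p,s) ds = α(p)`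
for all `p ∈ P`. -/
theorem statement6 (k n : ℕ) (hk : 0 < k) (hn : 0 < n)
    (f : (Fin k → ℝ) → ℝ → EuclideanSpace ℂ (Fin n))
    (α : (Fin k → ℝ) → EuclideanSpace ℂ (Fin n))
    (hf : ContinuousOn (fun q : (Fin k → ℝ) × ℝ => f q.1 q.2)
      (Icc (0 : Fin k → ℝ) 1 ×ˢ Icc (0:ℝ) 1))
    (hα : ContinuousOn α (Icc (0 : Fin k → ℝ) 1))
    (a b c d : ℝ) (hab : a < b) (hcd : c < d)
    (hJJ' : Disjoint (Icc a b) (Icc c d))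
    (hJ : Icc a b ⊆ Ioo (0:ℝ) 1) (hJ' : Icc c d ⊆ Ioo (0:ℝ) 1)
    (hCfull : ∀ p ∈ Icc (0 : Fin k → ℝ) 1, Submodule.span ℂ (f p '' Icc a b) = ⊤)
    (hRfull : ∀ p ∈ Icc (0 : Fin k → ℝ) 1, Submodule.span ℝ (f p '' Icc c d) = ⊤)
    (σ : ℝ) (hσ : 0 < σ) :
    ∃ h : (Fin k → ℝ) → ℝ → ℂ,
      ContinuousOn (fun q : (Fin k → ℝ) × ℝ => h q.1 q.2)
        (Icc (0 : Fin k → ℝ) 1 ×ˢ Icc (0:ℝ) 1) ∧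
      (∀ p ∈ Icc (0 : Fin k → ℝ) 1, ∀ s ∈ Icc (0:ℝ) 1, h p s ≠ 0) ∧
      (∀ p ∈ Icc (0 : Fin k → ℝ) 1, h p 0 = 1 ∧ h p 1 = 1) ∧
      (∀ p ∈ Icc (0 : Fin k → ℝ) 1, ∀ s ∈ Icc (0:ℝ) 1, |(h p s).re - 1| < σ) ∧
      (∀ p ∈ Icc (0 : Fin k → ℝ) 1, (∫ s in (0:ℝ)..1, h p s • f p s) = α p) := by
  classical
  let κ : (Fin k → ℝ) → (Fin k → ℝ) := fun p => 0 ⊔ (p ⊓ 1)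
  let τ : ℝ → ℝ := fun s => 0 ⊔ (s ⊓ 1)
  have hκ : Continuous κ := continuous_pi fun i =>
    (continuous_const.sup ((continuous_apply i).inf continuous_const) :
      Continuous fun p : Fin k → ℝ => (0:ℝ) ⊔ (p i ⊓ 1))
  have hτ : Continuous τ := continuous_const.sup (continuous_id.inf continuous_const)
  have hκm : ∀ p, κ p ∈ Icc (0 : Fin k → ℝ) 1 := fun p =>
    ⟨le_sup_left, sup_le zero_le_one inf_le_right⟩
  have hτm : ∀ s, τ s ∈ Icc (0 : ℝ) 1 := fun p =>
    ⟨le_sup_left, sup_le zero_le_one inf_le_right⟩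
  have hκe : ∀ p ∈ Icc (0 : Fin k → ℝ) 1, κ p = p := by
    intro p hp
    simp only [κ]
    rw [inf_eq_left.2 hp.2, sup_eq_right.2 hp.1]
  have hτe : ∀ p ∈ Icc (0 : ℝ) 1, τ p = p := by
    intro p hp
    simp only [τ]
    rw [inf_eq_left.2 hp.2, sup_eq_right.2 hp.1]
  have hF : Continuous (fun q : (Fin k → ℝ) × ℝ => f (κ q.1) (τ q.2)) :=
    hf.comp_continuous (f := fun q : (Fin k → ℝ) × ℝ => (κ q.1, τ q.2)) (by fun_prop)
      (fun q => ⟨hκm _, hτm _⟩)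
  have hA : Continuous (fun p => α (κ p)) := hα.comp_continuous hκ hκm
  have hI : Continuous fun p => ∫ s in (0:ℝ)..1, f (κ p) (τ s) :=
    intervalIntegral.continuous_parametric_intervalIntegral_of_continuous'
      (f := fun p s => f (κ p) (τ s)) hF 0 1
  have hB : Continuous fun p =>
      (-Complex.I) • (α (κ p) - ∫ s in (0:ℝ)..1, f (κ p) (τ s)) :=
    Continuous.const_smul (g := fun p => α (κ p) - ∫ s in (0:ℝ)..1, f (κ p) (τ s))
      (Continuous.sub hA hI) (-Complex.I)
  obtain ⟨u, hu, hu0, hui⟩ := real_solve n (fun p s => f (κ p) (τ s)) hF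
    (fun p => (-Complex.I) • (α (κ p) - ∫ s in (0:ℝ)..1, f (κ p) (τ s)))
    hB (by
      intro p
      rw [eq_top_iff, ← hRfull (κ p) (hκm p)]
      apply Submodule.span_mono
      rintro _ ⟨s, hs, rfl⟩
      refine ⟨s, hJ' hs, ?_⟩
      simp only
      rw [hτe s (Ioo_subset_Icc_self (hJ' hs))])
  have hre : ∀ p s, ((1 : ℂ) + Complex.I * (u p s : ℂ)).re = 1 := by intro p s; simp
  refine ⟨fun p s => 1 + Complex.I * (u p s : ℂ), ?_, ?_, ?_, ?_, ?_⟩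
  · exact (continuous_const.add (continuous_const.mul
      (Complex.continuous_ofReal.comp hu))).continuousOn
  · intro p _ s _ h0
    have := hre p s
    simp only at h0
    rw [h0] at this
    simp at this
  · intro p _
    simp [hu0 p]
  · intro p _ s _
    rw [hre]
    simpa using hσ
  · intro p hp
    have hFp : Continuous fun s => f (κ p) (τ s) :=
      hF.comp (by fun_prop : Continuous fun s : ℝ => (p, s))
    have hup : Continuous (u p) := hu.comp (by fun_prop : Continuous fun s : ℝ => (p, s))
    have e : (∫ s in (0:ℝ)..1, (1 + Complex.I * (u p s : ℂ)) • f p s)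
        = ∫ s in (0:ℝ)..1, (f (κ p) (τ s) + Complex.I • (u p s • f (κ p) (τ s))) := by
      apply intervalIntegral.integral_congr
      intro s hs
      rw [uIcc_of_le zero_le_one] at hs
      simp only
      rw [hκe p hp, hτe s hs, add_smul, one_smul, mul_smul]
      rfl
    have hsm : Continuous fun s => Complex.I • (u p s • f (κ p) (τ s)) :=
      Continuous.const_smul (g := fun s => u p s • f (κ p) (τ s)) (hup.smul hFp) Complex.I
    rw [e, intervalIntegral.integral_add (hFp.intervalIntegrable _ _)
      (hsm.intervalIntegrable _ _),
      intervalIntegral.integral_smul, hui p, smul_smul]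
    simp [hκe p hp]
end

section
/- Let k and n be positive integers, set P = [0,1]ᵏ and Q = [0,1]^{k−1} × {0} ⊂ P, and let f : P × [0,1] → ℂⁿ and α : P → ℂⁿ be continuous maps. Assume there are two nondegenerate closed intervals J and J′ with J ∩ J′ = ∅ and J ∪ J′ ⊂ (0,1) such that for every p ∈ P the path f_p := f(p, ·) is ℂ-full on J and ℝ-full on J′. Assume in addition that α(p) = ∫₀¹ f(p,s) ds for all p ∈ Q. Then there exists a continuous function h : P × [0,1] → ℂ \ {0} such that h(p, 0) = h(p, 1) = 1 for all p ∈ P, h(p, s) = 1 for all p ∈ Q and all s ∈ [0,1], and ∫₀¹ h(p,s)·f(p,s) ds = α(p) exactly for all p ∈ P. -/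
open MeasureTheory Set
open Filter Topology

/-- Bump function, positive exactly on `(a,b)`. -/
noncomputable def bumpF (a b s : ℝ) : ℝ := max 0 ((s - a) * (b - s))

lemma bumpF_cont (a b : ℝ) : Continuous (bumpF a b) := by
  unfold bumpF; fun_prop

lemma bumpF_nonneg (a b s : ℝ) : 0 ≤ bumpF a b s := le_max_left _ _

lemma bumpF_pos {a b s : ℝ} (h : s ∈ Ioo a b) : 0 < bumpF a b s :=
  lt_max_of_lt_right (mul_pos (sub_pos.2 h.1) (sub_pos.2 h.2))

lemma bumpF_zero {a b s : ℝ} (hab : a < b) (h : s ∉ Ioo a b) : bumpF a b s = 0 := by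
  refine max_eq_left ?_
  by_cases h1 : a < s
  · have h2 : b ≤ s := by
      by_contra h3
      exact h ⟨h1, not_le.1 h3⟩
    exact mul_nonpos_of_nonneg_of_nonpos (by linarith) (by linarith)
  · exact mul_nonpos_of_nonpos_of_nonneg (by linarith) (by linarith)

/-- Gram operator argument, inner product version. -/
lemma gram_inner {𝕜 : Type*} [RCLike 𝕜] {E : Type*} [NormedAddCommGroup E]
    [InnerProductSpace 𝕜 E] [NormedSpace ℝ E] [IsScalarTower ℝ 𝕜 E] [FiniteDimensional 𝕜 E]
    {X : Type*} [TopologicalSpace X]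
    (f : X → ℝ → E) (hf : Continuous (fun q : X × ℝ => f q.1 q.2))
    (a b : ℝ) (hab : a < b) (hJ : Icc a b ⊆ Ioo (0:ℝ) 1)
    (hfull : ∀ p, Submodule.span 𝕜 (f p '' Icc a b) = ⊤) :
    ∃ c : X → ℝ → (E →L[𝕜] 𝕜), Continuous (fun q : X × ℝ => c q.1 q.2) ∧
      (∀ p s, s ∉ Ioo a b → c p s = 0) ∧
      ∀ p v, (∫ s in (0:ℝ)..1, (c p s v) • f p s) = v := by
  have : CompleteSpace E := FiniteDimensional.complete 𝕜 E
  let T : X → ℝ → (E →L[𝕜] E) := fun p s =>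
    ((bumpF a b s : ℝ) : 𝕜) • (innerSL 𝕜 (f p s)).smulRight (f p s)
  have hT : Continuous (fun q : X × ℝ => T q.1 q.2) := by
    have h1 : Continuous (fun q : X × ℝ => innerSL 𝕜 (f q.1 q.2)) :=
      (innerSL 𝕜).continuous.comp hf
    have h2 : Continuous (fun q : X × ℝ => ((bumpF a b q.2 : ℝ) : 𝕜)) :=
      RCLike.continuous_ofReal.comp ((bumpF_cont a b).comp continuous_snd)
    have h3 : Continuous (fun q : X × ℝ =>
        ContinuousLinearMap.smulRightL 𝕜 E E (innerSL 𝕜 (f q.1 q.2)) (f q.1 q.2)) := by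
      fun_prop
    exact h2.smul h3
  have hTp : ∀ p, Continuous (T p) := fun p => hT.comp (by fun_prop : Continuous fun s => (p, s))
  have hfp : ∀ p, Continuous (f p) := fun p => hf.comp (by fun_prop : Continuous fun s => (p, s))
  let G : X → (E →L[𝕜] E) := fun p => ∫ s in (0:ℝ)..1, T p s
  have hG : Continuous G :=
    intervalIntegral.continuous_parametric_intervalIntegral_of_continuous' hT 0 1
  have hGv : ∀ p v, G p v = ∫ s in (0:ℝ)..1, T p s v := fun p v =>
    (ContinuousLinearMap.intervalIntegral_apply ((hTp p).intervalIntegrable 0 1) v)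
  have hinj : ∀ p v, G p v = 0 → v = 0 := by
    intro p v hv
    let g : ℝ → ℝ := fun s => bumpF a b s * ‖inner 𝕜 (f p s) v‖ ^ 2
    have hgc : Continuous g := by
      have := bumpF_cont a b
      have := hfp p
      fun_prop
    have hint : ∫ s in (0:ℝ)..1, g s = 0 := by
      have h1 : inner 𝕜 v (G p v) = ∫ s in (0:ℝ)..1, inner 𝕜 v (T p s v) := by
        rw [hGv]
        have hc : Continuous fun s => T p s v := (hTp p).clm_apply continuous_const
        exact ((innerSL 𝕜 v).intervalIntegral_comp_comm (hc.intervalIntegrable 0 1)).symm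
      have h2 : ∀ s, inner 𝕜 v (T p s v) = ((g s : ℝ) : 𝕜) := by
        intro s
        simp only [T, g, smul_apply, ContinuousLinearMap.smulRight_apply,
          innerSL_apply_apply, inner_smul_right]
        rw [← inner_conj_symm v (f p s), mul_comm (inner 𝕜 (f p s) v), RCLike.conj_mul]
        push_cast
        ring
      rw [hv, inner_zero_right] at h1
      simp only [h2] at h1
      rw [RCLike.intervalIntegral_ofReal] at h1
      exact_mod_cast h1.symm
    have hz : ∀ s ∈ Icc (0:ℝ) 1, g s = 0 := by
      intro s hs
      by_contra hne
      have hnn : ∀ t, 0 ≤ g t := fun t => mul_nonneg (bumpF_nonneg a b t) (by positivity)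
      have := intervalIntegral.integral_pos one_pos hgc.continuousOn (fun t _ => hnn t)
        ⟨s, hs, lt_of_le_of_ne (hnn s) (Ne.symm hne)⟩
      exact this.ne' hint
    have hz2 : ∀ s ∈ Ioo a b, inner 𝕜 (f p s) v = 0 := by
      intro s hs
      have h1 := hz s (Ioo_subset_Icc_self (hJ (Ioo_subset_Icc_self hs)))
      have h2 := (bumpF_pos hs).ne'
      simpa [g, h2] using h1
    have hz3 : ∀ s ∈ Icc a b, inner 𝕜 (f p s) v = 0 := by
      have hcl : IsClosed {s | inner 𝕜 (f p s) v = 0} :=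
        isClosed_eq ((hfp p).inner continuous_const) continuous_const
      have := closure_minimal (s := Ioo a b) hz2 hcl
      rwa [closure_Ioo hab.ne] at this
    have hv2 : v ∈ (Submodule.span 𝕜 (f p '' Icc a b))ᗮ := by
      rw [Submodule.mem_orthogonal]
      intro u hu
      induction hu using Submodule.span_induction with
      | mem x hx => obtain ⟨s, hs, rfl⟩ := hx; exact hz3 s hs
      | zero => simp
      | add x y _ _ hx hy => simp [inner_add_left, hx, hy]
      | smul r x _ hx => simp [inner_smul_left, hx]
    rw [hfull p] at hv2
    simpa using hv2
  have hunit : ∀ p, IsUnit (G p) := by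
    intro p
    rw [ContinuousLinearMap.isUnit_iff_bijective]
    have hi : Function.Injective (G p) := by
      rw [injective_iff_map_eq_zero]; exact hinj p
    exact ⟨hi, (LinearMap.injective_iff_surjective (f := (G p : E →ₗ[𝕜] E))).1 hi⟩
  let L : X → (E →L[𝕜] E) := fun p => Ring.inverse (G p)
  have hL : Continuous L := by
    rw [continuous_iff_continuousAt]
    intro p
    obtain ⟨u, hu⟩ := hunit p
    have := NormedRing.inverse_continuousAt u
    rw [hu] at this
    exact ContinuousAt.comp (f := G) this hG.continuousAt
  have hGL : ∀ p v, G p (L p v) = v := by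
    intro p v
    have := Ring.mul_inverse_cancel _ (hunit p)
    exact DFunLike.congr_fun this v
  refine ⟨fun p s => ((bumpF a b s : ℝ) : 𝕜) • (innerSL 𝕜 (f p s)).comp (L p), ?_, ?_, ?_⟩
  · have h1 : Continuous (fun q : X × ℝ => innerSL 𝕜 (f q.1 q.2)) :=
      (innerSL 𝕜).continuous.comp hf
    have h2 : Continuous (fun q : X × ℝ => ((bumpF a b q.2 : ℝ) : 𝕜)) :=
      RCLike.continuous_ofReal.comp ((bumpF_cont a b).comp continuous_snd)
    exact h2.smul (h1.clm_comp (hL.comp continuous_fst))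
  · intro p s hs
    simp only [bumpF_zero hab hs, RCLike.ofReal_zero]
    exact zero_smul 𝕜 ((innerSL 𝕜 (f p s)).comp (L p))
  · intro p v
    conv_rhs => rw [← hGL p v, hGv]
    congr 1; ext s
    simp only [T, smul_apply, ContinuousLinearMap.smulRight_apply, innerSL_apply_apply,
      ContinuousLinearMap.comp_apply, smul_smul, smul_eq_mul]

/-- Normed space version. -/
lemma gram_normed {𝕜 : Type*} [RCLike 𝕜] {E : Type*} [NormedAddCommGroup E]
    [NormedSpace 𝕜 E] [NormedSpace ℝ E] [IsScalarTower ℝ 𝕜 E] [FiniteDimensional 𝕜 E]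
    {X : Type*} [TopologicalSpace X]
    (f : X → ℝ → E) (hf : Continuous (fun q : X × ℝ => f q.1 q.2))
    (a b : ℝ) (hab : a < b) (hJ : Icc a b ⊆ Ioo (0:ℝ) 1)
    (hfull : ∀ p, Submodule.span 𝕜 (f p '' Icc a b) = ⊤) :
    ∃ c : X → ℝ → (E →L[𝕜] 𝕜), Continuous (fun q : X × ℝ => c q.1 q.2) ∧
      (∀ p s, s ∉ Ioo a b → c p s = 0) ∧
      ∀ p v, (∫ s in (0:ℝ)..1, (c p s v) • f p s) = v := by
  have : CompleteSpace E := FiniteDimensional.complete 𝕜 E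
  let e : E ≃L[𝕜] EuclideanSpace 𝕜 (Fin (Module.finrank 𝕜 E)) :=
    ContinuousLinearEquiv.ofFinrankEq (by simp)
  obtain ⟨c, hc1, hc2, hc3⟩ := gram_inner (𝕜 := 𝕜) (fun p s => e (f p s)) (e.continuous.comp hf)
    a b hab hJ (by
      intro p
      have h1 : (fun s => e (f p s)) '' Icc a b = (e.toLinearEquiv : E →ₗ[𝕜] _) '' (f p '' Icc a b) := by
        rw [image_image]; rfl
      rw [h1, Submodule.span_image, hfull p, Submodule.map_top, LinearEquiv.range])
  refine ⟨fun p s => (c p s).comp (e : E →L[𝕜] _), hc1.clm_comp continuous_const, ?_, ?_⟩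
  · intro p s hs
    simp [hc2 p s hs]
  · intro p v
    apply e.injective
    have hfp : Continuous (f p) := hf.comp (by fun_prop : Continuous fun s => (p, s))
    have hcp : Continuous (c p) := hc1.comp (by fun_prop : Continuous fun s => (p, s))
    have hcc : Continuous fun s => (c p s (e v)) • f p s :=
      (hcp.clm_apply continuous_const).smul hfp
    have h2 := (e : E →L[𝕜] EuclideanSpace 𝕜 (Fin (Module.finrank 𝕜 E))).intervalIntegral_comp_comm (hcc.intervalIntegrable (μ := volume) 0 1)
    have h3 := hc3 p (e v)
    simp only [ContinuousLinearMap.comp_apply, ContinuousLinearEquiv.coe_coe, map_smul] at h2 ⊢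
    rw [← h2, h3]

/-- Uniform Riemann-Lebesgue lemma. -/
lemma uniform_RL {E : Type*} [NormedAddCommGroup E] [NormedSpace ℂ E]
    {X : Type*} [TopologicalSpace X] [CompactSpace X]
    (F : X → ℝ → E) (hF : Continuous (fun q : X × ℝ => F q.1 q.2)) (ε : ℝ) (hε : 0 < ε) :
    ∀ᶠ w in cocompact ℝ, ∀ p, ‖∫ s in (0:ℝ)..1, (Real.fourierChar (-(s * w)) : ℂ) • F p s‖ < ε := by
  have hFp : ∀ p, Continuous (F p) := fun p => hF.comp (by fun_prop : Continuous fun s => (p, s))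
  suffices h : ∀ᶠ w in cocompact ℝ, ∀ p ∈ (univ : Set X),
      ‖∫ s in (0:ℝ)..1, (Real.fourierChar (-(s * w)) : ℂ) • F p s‖ < ε by
    simpa using h
  refine isCompact_univ.induction_on (p := fun S : Set X => ∀ᶠ w in cocompact ℝ, ∀ p ∈ S,
      ‖∫ s in (0:ℝ)..1, (Real.fourierChar (-(s * w)) : ℂ) • F p s‖ < ε) ?_ ?_ ?_ ?_
  · simp
  · intro S T hST h
    filter_upwards [h] with w hw p hp using hw p (hST hp)
  · intro S T hS hT
    filter_upwards [hS, hT] with w h1 h2 p hp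
    exact hp.elim (h1 p) (h2 p)
  · intro p₀ _
    let D : X → ℝ := fun p => ∫ s in (0:ℝ)..1, ‖F p s - F p₀ s‖
    have hD : Continuous D := by
      refine intervalIntegral.continuous_parametric_intervalIntegral_of_continuous' ?_ 0 1
      have : Continuous fun q : X × ℝ => F p₀ q.2 := (hFp p₀).comp continuous_snd
      exact (hF.sub this).norm
    have hD0 : D p₀ = 0 := by simp [D]
    have hnear : {p | D p < ε / 2} ∈ 𝓝 p₀ :=
      (isOpen_lt hD continuous_const).mem_nhds (by simp only [mem_ofPred_eq, hD0]; linarith)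
    refine ⟨_, mem_nhdsWithin_of_mem_nhds hnear, ?_⟩
    have hRL := Real.tendsto_integral_exp_smul_cocompact ((Ioc (0:ℝ) 1).indicator (F p₀))
    have hRL2 := (Metric.tendsto_nhds.1 hRL) (ε / 2) (by linarith)
    filter_upwards [hRL2] with w hw p hp
    have hcont : ∀ p, Continuous fun s : ℝ => (Real.fourierChar (-(s * w)) : ℂ) • F p s := by
      intro p
      have h1 : Continuous fun s : ℝ => (Real.fourierChar (-(s * w)) : ℂ) :=
        continuous_subtype_val.comp (Real.continuous_fourierChar.comp (by fun_prop))
      exact h1.smul (hFp p)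
    have h1 : ‖∫ s in (0:ℝ)..1, (Real.fourierChar (-(s * w)) : ℂ) • F p₀ s‖ < ε / 2 := by
      rw [dist_zero_right] at hw
      refine lt_of_eq_of_lt (congrArg norm ?_) hw
      rw [intervalIntegral.integral_of_le zero_le_one, ← integral_indicator measurableSet_Ioc]
      congr 1; ext s
      by_cases hs : s ∈ Ioc (0:ℝ) 1 <;> simp [hs, Circle.smul_def]
    have h2 : ‖∫ s in (0:ℝ)..1, ((Real.fourierChar (-(s * w)) : ℂ) • F p s -
        (Real.fourierChar (-(s * w)) : ℂ) • F p₀ s)‖ ≤ D p := by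
      refine (intervalIntegral.norm_integral_le_integral_norm zero_le_one).trans (le_of_eq ?_)
      simp only [D]
      congr 1; ext s
      rw [← smul_sub, norm_smul, Circle.norm_coe, one_mul]
    rw [intervalIntegral.integral_sub ((hcont p).intervalIntegrable 0 1)
      ((hcont p₀).intervalIntegrable 0 1)] at h2
    have h3 : D p < ε / 2 := hp
    have h4 := norm_le_norm_add_norm_sub
      (∫ s in (0:ℝ)..1, (Real.fourierChar (-(s * w)) : ℂ) • F p₀ s)
      (∫ s in (0:ℝ)..1, (Real.fourierChar (-(s * w)) : ℂ) • F p s)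
    rw [norm_sub_rev] at h2
    rw [norm_sub_rev] at h4
    have h5 := norm_sub_norm_le
      (∫ s in (0:ℝ)..1, (Real.fourierChar (-(s * w)) : ℂ) • F p s)
      (∫ s in (0:ℝ)..1, (Real.fourierChar (-(s * w)) : ℂ) • F p₀ s)
    rw [norm_sub_rev] at h5
    linarith

/-- Oscillating factor: mean one, meets the real line only at zero. -/
noncomputable def zetaF (t : ℝ) : ℂ := 2 * (Real.sin t : ℂ) ^ 2 + 2 * (Real.sin t : ℂ) * Complex.I

lemma zetaF_cont : Continuous zetaF := by
  unfold zetaF; fun_prop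

lemma zetaF_ne (x t : ℝ) : 1 + (x : ℂ) * zetaF t ≠ 0 := by
  intro h
  have hi := congrArg Complex.im h
  have hr := congrArg Complex.re h
  have e : (1 : ℂ) + (x : ℂ) * zetaF t =
      ((1 + x * (2 * Real.sin t ^ 2) : ℝ) : ℂ) + ((x * (2 * Real.sin t) : ℝ) : ℂ) * Complex.I := by
    unfold zetaF; push_cast; ring
  rw [e] at hi hr
  simp only [Complex.add_im, Complex.add_re, Complex.re_ofReal_mul, Complex.im_ofReal_mul,
    Complex.ofReal_re, Complex.ofReal_im, Complex.I_re, Complex.I_im, Complex.zero_re,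
    Complex.zero_im] at hi hr
  have : x * (2 * Real.sin t ^ 2) = 0 := by
    have : x * (2 * Real.sin t) = 0 := by linarith
    calc _ = x * (2 * Real.sin t) * Real.sin t := by ring
      _ = 0 := by rw [this, zero_mul]
  linarith

lemma zetaF_sub_one (N s : ℝ) : zetaF (2 * Real.pi * (N * s)) - 1 =
    -(1/2) * (Real.fourierChar (-(s * (2 * N))) : ℂ) - (1/2) * (Real.fourierChar (-(s * (-2 * N))) : ℂ)
    + (Real.fourierChar (-(s * (-1 * N))) : ℂ) - (Real.fourierChar (-(s * (1 * N))) : ℂ) := by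
  simp only [Real.fourierChar_apply]
  set x : ℂ := Complex.exp ((2 * Real.pi * (N * s) : ℝ) * Complex.I) with hx
  set y : ℂ := Complex.exp (-((2 * Real.pi * (N * s) : ℝ) * Complex.I)) with hy
  have hxy : x * y = 1 := by rw [hx, hy, ← Complex.exp_add]; simp
  have e1 : Complex.exp (((2 * Real.pi * -(s * (2 * N)) : ℝ) : ℂ) * Complex.I) = y ^ 2 := by
    rw [hy, ← Complex.exp_nat_mul]; congr 1; push_cast; ring
  have e2 : Complex.exp (((2 * Real.pi * -(s * (-2 * N)) : ℝ) : ℂ) * Complex.I) = x ^ 2 := by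
    rw [hx, ← Complex.exp_nat_mul]; congr 1; push_cast; ring
  have e3 : Complex.exp (((2 * Real.pi * -(s * (-1 * N)) : ℝ) : ℂ) * Complex.I) = x := by
    rw [hx]; congr 1; push_cast; ring
  have e4 : Complex.exp (((2 * Real.pi * -(s * (1 * N)) : ℝ) : ℂ) * Complex.I) = y := by
    rw [hy]; congr 1; push_cast; ring
  rw [e1, e2, e3, e4]
  have hs : ((Real.sin (2 * Real.pi * (N * s)) : ℝ) : ℂ) = (y - x) * Complex.I / 2 := by
    rw [Complex.ofReal_sin, Complex.sin, hx, hy, neg_mul]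
  unfold zetaF
  rw [hs]
  have hI := Complex.I_sq
  linear_combination (y-x + (y-x)^2/2) * hI + hxy

lemma lin4 {E : Type*} [NormedAddCommGroup E] [NormedSpace ℂ E] {A B C D : ℝ → E}
    (hA : IntervalIntegrable A volume 0 1) (hB : IntervalIntegrable B volume 0 1)
    (hC : IntervalIntegrable C volume 0 1) (hD : IntervalIntegrable D volume 0 1) :
    ∫ s in (0:ℝ)..1, ((-(1/2) : ℂ) • A s - (1/2 : ℂ) • B s + C s - D s) =
      (-(1/2) : ℂ) • (∫ s in (0:ℝ)..1, A s) - (1/2 : ℂ) • (∫ s in (0:ℝ)..1, B s)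
      + (∫ s in (0:ℝ)..1, C s) - (∫ s in (0:ℝ)..1, D s) := by
  have hA' : IntervalIntegrable (fun s => (-(1/2) : ℂ) • A s) volume 0 1 := hA.smul _
  have hB' : IntervalIntegrable (fun s => (1/2 : ℂ) • B s) volume 0 1 := hB.smul _
  rw [intervalIntegral.integral_sub ((hA'.sub hB').add hC) hD,
    intervalIntegral.integral_add (hA'.sub hB') hC,
    intervalIntegral.integral_sub hA' hB', intervalIntegral.integral_smul,
    intervalIntegral.integral_smul]

lemma osc_small {E : Type*} [NormedAddCommGroup E] [NormedSpace ℂ E]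
    {X : Type*} [TopologicalSpace X] [CompactSpace X]
    (F : X → ℝ → E) (hF : Continuous (fun q : X × ℝ => F q.1 q.2)) (ε : ℝ) (hε : 0 < ε) :
    ∃ N : ℝ, ∀ p, ‖∫ s in (0:ℝ)..1, (zetaF (2 * Real.pi * (N * s)) - 1) • F p s‖ < ε := by
  have hFp : ∀ p, Continuous (F p) := fun p => hF.comp (by fun_prop : Continuous fun s => (p, s))
  have h := uniform_RL F hF (ε / 4) (by linarith)
  have key : ∀ r : ℝ, r ≠ 0 → ∀ᶠ N : ℝ in cocompact ℝ, ∀ p,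
      ‖∫ s in (0:ℝ)..1, (Real.fourierChar (-(s * (r * N))) : ℂ) • F p s‖ < ε / 4 := by
    intro r hr
    exact ((Homeomorph.mulLeft₀ r hr).isClosedEmbedding.tendsto_cocompact).eventually h
  obtain ⟨N, ⟨⟨h1, h2⟩, h3⟩, h4⟩ := (((key 2 (by norm_num)).and (key (-2) (by norm_num))).and
    (key (-1) (by norm_num))).and (key 1 (by norm_num)) |>.exists
  refine ⟨N, fun p => ?_⟩
  specialize h1 p; specialize h2 p; specialize h3 p; specialize h4 p
  have hi : ∀ r : ℝ, IntervalIntegrable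
      (fun s : ℝ => (Real.fourierChar (-(s * (r * N))) : ℂ) • F p s) volume 0 1 := by
    intro r
    have h1 : Continuous fun s : ℝ => (Real.fourierChar (-(s * (r * N))) : ℂ) :=
      continuous_subtype_val.comp (Real.continuous_fourierChar.comp (by fun_prop))
    exact (h1.smul (hFp p)).intervalIntegrable 0 1
  have e : ∫ s in (0:ℝ)..1, (zetaF (2 * Real.pi * (N * s)) - 1) • F p s =
      (-(1/2) : ℂ) • (∫ s in (0:ℝ)..1, (Real.fourierChar (-(s * (2 * N))) : ℂ) • F p s)
      - (1/2 : ℂ) • (∫ s in (0:ℝ)..1, (Real.fourierChar (-(s * (-2 * N))) : ℂ) • F p s)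
      + (∫ s in (0:ℝ)..1, (Real.fourierChar (-(s * (-1 * N))) : ℂ) • F p s)
      - (∫ s in (0:ℝ)..1, (Real.fourierChar (-(s * (1 * N))) : ℂ) • F p s) := by
    rw [← lin4 (hi 2) (hi (-2)) (hi (-1)) (hi 1)]
    congr 1; ext s
    rw [zetaF_sub_one, sub_smul, add_smul, sub_smul, mul_smul, mul_smul]
  rw [e]
  refine (norm_sub_le _ _).trans_lt ?_
  have g1 := norm_add_le ((-(1/2) : ℂ) • (∫ s in (0:ℝ)..1, (Real.fourierChar (-(s * (2 * N))) : ℂ) • F p s)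
      - (1/2 : ℂ) • (∫ s in (0:ℝ)..1, (Real.fourierChar (-(s * (-2 * N))) : ℂ) • F p s))
      (∫ s in (0:ℝ)..1, (Real.fourierChar (-(s * (-1 * N))) : ℂ) • F p s)
  have g2 := norm_sub_le ((-(1/2) : ℂ) • (∫ s in (0:ℝ)..1, (Real.fourierChar (-(s * (2 * N))) : ℂ) • F p s))
      ((1/2 : ℂ) • (∫ s in (0:ℝ)..1, (Real.fourierChar (-(s * (-2 * N))) : ℂ) • F p s))
  rw [norm_smul, norm_smul] at g2
  have n1 : ‖(-(1/2) : ℂ)‖ = 1/2 := by norm_num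
  have n2 : ‖((1/2) : ℂ)‖ = 1/2 := by norm_num
  rw [n1, n2] at g2
  linarith [norm_nonneg (∫ s in (0:ℝ)..1, (Real.fourierChar (-(s * (2 * N))) : ℂ) • F p s),
    norm_nonneg (∫ s in (0:ℝ)..1, (Real.fourierChar (-(s * (-2 * N))) : ℂ) • F p s)]

lemma main_compact {E : Type*} [NormedAddCommGroup E] [NormedSpace ℂ E] [inst : NormedSpace ℝ E]
    [IsScalarTower ℝ ℂ E] [FiniteDimensional ℂ E] [FiniteDimensional ℝ E]
    {X : Type*} [TopologicalSpace X] [CompactSpace X]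
    (f : X → ℝ → E) (hf : Continuous (fun q : X × ℝ => f q.1 q.2))
    (β : X → E) (hβ : Continuous β)
    (a b c d : ℝ) (hab : a < b) (hcd : c < d)
    (hJJ' : Disjoint (Icc a b) (Icc c d))
    (hJ : Icc a b ⊆ Ioo (0:ℝ) 1) (hJ' : Icc c d ⊆ Ioo (0:ℝ) 1)
    (hCfull : ∀ p, Submodule.span ℂ (f p '' Icc a b) = ⊤)
    (hRfull : ∀ p, Submodule.span ℝ (f p '' Icc c d) = ⊤) :
    ∃ h : X → ℝ → ℂ, Continuous (fun q : X × ℝ => h q.1 q.2) ∧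
      (∀ p, ∀ s ∈ Icc (0:ℝ) 1, h p s ≠ 0) ∧
      (∀ p, h p 0 = 1 ∧ h p 1 = 1) ∧
      (∀ p, β p = 0 → ∀ s, h p s = 1) ∧
      (∀ p, (∫ s in (0:ℝ)..1, h p s • f p s) = (∫ s in (0:ℝ)..1, f p s) + β p) := by
  have hsm : ∀ (r : ℝ) (v : E), ((r : ℂ)) • v = r • v := fun r v => by
    rw [← algebraMap_smul ℂ r v]; rfl
  have hinst : inst = NormedSpace.complexToReal := by
    ext r v
    exact (hsm r v).symm
  subst hinst
  have : CompleteSpace E := FiniteDimensional.complete ℂ E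
  obtain ⟨cR, hR1, hR2, hR3⟩ := gram_normed (𝕜 := ℝ) f hf c d hcd hJ' hRfull
  obtain ⟨cC, hC1, hC2, hC3⟩ := gram_normed (𝕜 := ℂ) f hf a b hab hJ hCfull
  have hfp : ∀ p, Continuous (f p) := fun p => hf.comp (by fun_prop : Continuous fun s => (p, s))
  let x : X → ℝ → ℝ := fun p s => cR p s (β p)
  have hx : Continuous (fun q : X × ℝ => x q.1 q.2) := hR1.clm_apply (hβ.comp continuous_fst)
  let F : X → ℝ → E := fun p s => ((x p s : ℝ) : ℂ) • f p s
  have hF : Continuous (fun q : X × ℝ => F q.1 q.2) :=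
    (Complex.continuous_ofReal.comp hx).smul hf
  have hFp : ∀ p, Continuous (F p) := fun p => hF.comp (by fun_prop : Continuous fun s => (p, s))
  have hFint : ∀ p, ∫ s in (0:ℝ)..1, F p s = β p := by
    intro p
    refine Eq.trans ?_ (hR3 p (β p))
    exact intervalIntegral.integral_congr fun s _ => hsm _ _
  obtain ⟨M, hM⟩ : ∃ M : ℝ, ∀ q ∈ (univ : Set X) ×ˢ Icc (0:ℝ) 1, ‖cC q.1 q.2‖ ≤ M :=
    (isCompact_univ.prod isCompact_Icc).exists_bound_of_continuousOn hC1.continuousOn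
  obtain ⟨N, hN⟩ := osc_small F hF (1 / (|M| + 1)) (by positivity)
  let z : ℝ → ℂ := fun s => zetaF (2 * Real.pi * (N * s))
  have hz : Continuous z := zetaF_cont.comp (by fun_prop)
  let e : X → E := fun p => -∫ s in (0:ℝ)..1, (z s - 1) • F p s
  have he : Continuous e := by
    refine (intervalIntegral.continuous_parametric_intervalIntegral_of_continuous' ?_ 0 1).neg
    have : Continuous fun q : X × ℝ => z q.2 - 1 := by fun_prop
    exact this.smul hF
  have heM : ∀ p, ‖e p‖ < 1 / (|M| + 1) := fun p => by
    simp only [e, norm_neg]; exact hN p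
  have hcorr : Continuous (fun q : X × ℝ => cC q.1 q.2 (e q.1)) :=
    hC1.clm_apply (he.comp continuous_fst)
  have hh : Continuous (fun q : X × ℝ => 1 + (x q.1 q.2 : ℂ) * z q.2 + cC q.1 q.2 (e q.1)) := by
    have h1 := Complex.continuous_ofReal.comp hx
    have h2 : Continuous fun q : X × ℝ => z q.2 := by fun_prop
    exact (continuous_const.add (h1.mul h2)).add hcorr
  have hx0 : ∀ p s, s ∉ Ioo c d → x p s = 0 := fun p s hs => by simp [x, hR2 p s hs]
  refine ⟨fun p s => 1 + (x p s : ℂ) * z s + cC p s (e p), hh, ?_, ?_, ?_, ?_⟩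
  · intro p s hs
    by_cases hsc : s ∈ Ioo c d
    · have hsa : s ∉ Ioo a b := fun h =>
        Set.disjoint_left.1 hJJ' (Ioo_subset_Icc_self h) (Ioo_subset_Icc_self hsc)
      simp only [hC2 p s hsa, zero_apply, add_zero]
      exact zetaF_ne _ _
    · simp only [hx0 p s hsc, Complex.ofReal_zero, zero_mul, add_zero]
      intro h0
      have h1 : ‖cC p s (e p)‖ = 1 := by
        rw [(eq_neg_of_add_eq_zero_right h0), norm_neg, norm_one]
      have h2 := (cC p s).le_opNorm (e p)
      have h3 : ‖cC p s‖ ≤ |M| := (hM (p, s) ⟨mem_univ _, hs⟩).trans (le_abs_self M)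
      have h4 := heM p
      rw [lt_div_iff₀ (by positivity)] at h4
      have h5 : ‖cC p s‖ * ‖e p‖ ≤ |M| * ‖e p‖ := by gcongr
      nlinarith [norm_nonneg (e p)]
  · intro p
    have h0c : (0:ℝ) ∉ Ioo c d := fun h => lt_irrefl _ (hJ' (Ioo_subset_Icc_self h)).1
    have h1c : (1:ℝ) ∉ Ioo c d := fun h => lt_irrefl _ (hJ' (Ioo_subset_Icc_self h)).2
    have h0a : (0:ℝ) ∉ Ioo a b := fun h => lt_irrefl _ (hJ (Ioo_subset_Icc_self h)).1
    have h1a : (1:ℝ) ∉ Ioo a b := fun h => lt_irrefl _ (hJ (Ioo_subset_Icc_self h)).2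
    constructor
    · simp [hx0 p _ h0c, hC2 p _ h0a]
    · simp [hx0 p _ h1c, hC2 p _ h1a]
  · intro p hp s
    have hx' : ∀ s, x p s = 0 := fun s => by simp [x, hp]
    have hF' : ∀ s, F p s = 0 := fun s => by
      simp only [F, hx', Complex.ofReal_zero]; exact zero_smul ℂ _
    have he' : e p = 0 := by simp [e, hF']
    simp [hx', he']
  · intro p
    have hcp : Continuous fun s => cC p s (e p) :=
      hcorr.comp (by fun_prop : Continuous fun s => (p, s))
    have i1 := (hfp p).intervalIntegrable (μ := volume) 0 1
    have i2 := (hFp p).intervalIntegrable (μ := volume) 0 1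
    have i3 : IntervalIntegrable (fun s => (z s - 1) • F p s) volume 0 1 :=
      ((hz.sub continuous_const).smul (hFp p)).intervalIntegrable 0 1
    have i4 : IntervalIntegrable (fun s => cC p s (e p) • f p s) volume 0 1 :=
      (hcp.smul (hfp p)).intervalIntegrable 0 1
    have hs : ∀ s, (1 + (x p s : ℂ) * z s + cC p s (e p)) • f p s =
        f p s + F p s + (z s - 1) • F p s + cC p s (e p) • f p s := by
      intro s
      simp only [F]
      module
    simp only [hs]
    rw [intervalIntegral.integral_add ((i1.add i2).add i3) i4,
      intervalIntegral.integral_add (i1.add i2) i3, intervalIntegral.integral_add i1 i2, hFint,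
      hC3 p (e p)]
    simp only [e]
    abel

/-- Corollary 3.5, addendum. Let `P = [0,1]ᵏ` and
`Q = [0,1]^{k-1} × {0} ⊂ P` (points of `P` with vanishing last coordinate), and let
`f : P × [0,1] → ℂⁿ` and `α : P → ℂⁿ` be continuous. Assume there are disjoint
nondegenerate closed intervals `J = [a,b]` and `J' = [c,d]` in `(0,1)` such that each path
`f_p` is ℂ-full on `J` and ℝ-full on `J'`, and that `α(p) = ∫₀¹ f(p,s) ds` for all `p ∈ Q`.
Then there is a continuous nowhere-vanishing `h : P × [0,1] → ℂ*` with
`h(p,0) = h(p,1) = 1` for all `p ∈ P`, `h(p,s) = 1` for all `p ∈ Q` and `s ∈ [0,1]`, and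
`∫₀¹ h(p,s) • f(p,s) ds = α(p)` for all `p ∈ P`. -/
theorem statement7 (k n : ℕ) (hk : 0 < k) (hn : 0 < n)
    (f : (Fin k → ℝ) → ℝ → EuclideanSpace ℂ (Fin n))
    (α : (Fin k → ℝ) → EuclideanSpace ℂ (Fin n))
    (hf : ContinuousOn (fun q : (Fin k → ℝ) × ℝ => f q.1 q.2)
      (Icc (0 : Fin k → ℝ) 1 ×ˢ Icc (0:ℝ) 1))
    (hα : ContinuousOn α (Icc (0 : Fin k → ℝ) 1))
    (a b c d : ℝ) (hab : a < b) (hcd : c < d)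
    (hJJ' : Disjoint (Icc a b) (Icc c d))
    (hJ : Icc a b ⊆ Ioo (0:ℝ) 1) (hJ' : Icc c d ⊆ Ioo (0:ℝ) 1)
    (hCfull : ∀ p ∈ Icc (0 : Fin k → ℝ) 1, Submodule.span ℂ (f p '' Icc a b) = ⊤)
    (hRfull : ∀ p ∈ Icc (0 : Fin k → ℝ) 1, Submodule.span ℝ (f p '' Icc c d) = ⊤)
    (hαQ : ∀ p ∈ Icc (0 : Fin k → ℝ) 1, p ⟨k - 1, by omega⟩ = 0 →
      α p = ∫ s in (0:ℝ)..1, f p s) :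
    ∃ h : (Fin k → ℝ) → ℝ → ℂ,
      ContinuousOn (fun q : (Fin k → ℝ) × ℝ => h q.1 q.2)
        (Icc (0 : Fin k → ℝ) 1 ×ˢ Icc (0:ℝ) 1) ∧
      (∀ p ∈ Icc (0 : Fin k → ℝ) 1, ∀ s ∈ Icc (0:ℝ) 1, h p s ≠ 0) ∧
      (∀ p ∈ Icc (0 : Fin k → ℝ) 1, h p 0 = 1 ∧ h p 1 = 1) ∧
      (∀ p ∈ Icc (0 : Fin k → ℝ) 1, p ⟨k - 1, by omega⟩ = 0 →
        ∀ s ∈ Icc (0:ℝ) 1, h p s = 1) ∧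
      (∀ p ∈ Icc (0 : Fin k → ℝ) 1, (∫ s in (0:ℝ)..1, h p s • f p s) = α p) := by
  let cl : (Fin k → ℝ) → Icc (0 : Fin k → ℝ) 1 := fun q =>
    ⟨fun i => max 0 (min 1 (q i)), fun i => le_max_left _ _,
      fun i => max_le zero_le_one (min_le_left _ _)⟩
  have hcl : Continuous cl := by
    refine Continuous.subtype_mk ?_ _
    fun_prop
  have hclid : ∀ p (hp : p ∈ Icc (0 : Fin k → ℝ) 1), cl p = ⟨p, hp⟩ := by
    intro p hp
    apply Subtype.ext
    funext i
    have h0 : 0 ≤ p i := hp.1 i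
    have h1 : p i ≤ 1 := hp.2 i
    simp [cl, h0, h1]
  let ct : ℝ → ℝ := fun s => max 0 (min 1 s)
  have hct : Continuous ct := by fun_prop
  have hctm : ∀ s, ct s ∈ Icc (0:ℝ) 1 := fun s =>
    ⟨le_max_left _ _, max_le zero_le_one (min_le_left _ _)⟩
  have hctid : ∀ s ∈ Icc (0:ℝ) 1, ct s = s := by
    intro s hs
    simp [ct, hs.1, hs.2]
  let g : Icc (0 : Fin k → ℝ) 1 → ℝ → EuclideanSpace ℂ (Fin n) := fun p s => f p (ct s)
  have hg : Continuous (fun q : Icc (0 : Fin k → ℝ) 1 × ℝ => g q.1 q.2) := by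
    refine hf.comp_continuous (f := fun q : Icc (0 : Fin k → ℝ) 1 × ℝ => ((q.1 : Fin k → ℝ), ct q.2))
      (by fun_prop) ?_
    rintro ⟨p, s⟩
    exact ⟨p.2, hctm s⟩
  have hgim : ∀ (p : Icc (0 : Fin k → ℝ) 1) (u v : ℝ), Icc u v ⊆ Ioo (0:ℝ) 1 →
      g p '' Icc u v = f p '' Icc u v := by
    intro p u v huv
    refine image_congr fun s hs => ?_
    simp only [g, hctid s (Ioo_subset_Icc_self (huv hs))]
  have hgint : ∀ p : Icc (0 : Fin k → ℝ) 1, ∫ s in (0:ℝ)..1, g p s = ∫ s in (0:ℝ)..1, f p s := by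
    intro p
    refine intervalIntegral.integral_congr fun s hs => ?_
    rw [uIcc_of_le zero_le_one] at hs
    simp only [g, hctid s hs]
  let β : Icc (0 : Fin k → ℝ) 1 → EuclideanSpace ℂ (Fin n) := fun p =>
    α p - ∫ s in (0:ℝ)..1, g p s
  have hβ : Continuous β :=
    (hα.comp_continuous continuous_subtype_val (fun p => p.2)).sub
      (intervalIntegral.continuous_parametric_intervalIntegral_of_continuous' hg 0 1)
  have : FiniteDimensional ℝ (EuclideanSpace ℂ (Fin n)) := FiniteDimensional.trans ℝ ℂ _
  obtain ⟨h, h1, h2, h3, h4, h5⟩ := main_compact g hg β hβ a b c d hab hcd hJJ' hJ hJ'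
    (fun p => by rw [hgim p a b hJ]; exact hCfull p p.2)
    (fun p => by rw [hgim p c d hJ']; exact hRfull p p.2)
  refine ⟨fun q s => h (cl q) s, ?_, ?_, ?_, ?_, ?_⟩
  · have : Continuous fun q : (Fin k → ℝ) × ℝ => (cl q.1, q.2) := by fun_prop
    exact (h1.comp this).continuousOn
  · exact fun p _ s hs => h2 _ s hs
  · exact fun p _ => h3 _
  · intro p hp hp0 s _
    refine h4 _ ?_ s
    rw [hclid p hp]
    simp only [β, hgint]
    rw [hαQ p hp hp0, sub_self]
  · intro p hp
    have h6 := h5 (cl p)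
    rw [hclid p hp] at h6
    simp only [β, add_sub_cancel] at h6
    rw [← h6]
    refine intervalIntegral.integral_congr fun s hs => ?_
    rw [uIcc_of_le zero_le_one] at hs
    simp only [g, hctid s hs, hclid p hp]
end

section
/- For every integer n ≥ 3, the hyperquadric 𝐐^{n−2} = {[z₁ : ⋯ : zₙ] ∈ ℂℙ^{n−1} : z₁² + ⋯ + zₙ² = 0}, equipped with the subspace topology inherited from complex projective space ℂℙ^{n−1}, is a nonempty, path-connected, simply connected topological space. -/
open scoped LinearAlgebra.Projectivization

/-- The quotient topology on the projectivization of a topological vector space: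
`ℙ K V` is the quotient of the subspace `{v : V // v ≠ 0}` of `V`. -/
instance projectivizationTopology (K V : Type*) [DivisionRing K] [AddCommGroup V]
    [Module K V] [TopologicalSpace V] : TopologicalSpace (Projectivization K V) :=
  inferInstanceAs (TopologicalSpace (Quotient (projectivizationSetoid K V)))

/-- The hyperquadric `𝐐^{n-2} = {[z₁ : ⋯ : zₙ] ∈ ℂℙ^{n-1} : z₁² + ⋯ + zₙ² = 0}`,
a subset of the complex projective space `ℙ ℂ (Fin n → ℂ)`.  The defining condition
is invariant under scaling of the homogeneous coordinates. -/
def hyperquadric (n : ℕ) : Set (ℙ ℂ (Fin n → ℂ)) :=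
  {x | ∃ (z : Fin n → ℂ) (hz : z ≠ 0), (∑ i, z i ^ 2) = 0 ∧ Projectivization.mk ℂ z hz = x}

open Set unitInterval in
theorem vk_loops {X ι : Type*} [TopologicalSpace X] (U : ι → Set X) (x₀ : X)
    (hU : ∀ i, IsOpen (U i)) (hx : ∀ i, x₀ ∈ U i) (hcov : ∀ x, ∃ i, x ∈ U i)
    (hsc : ∀ i (a b : X) (γ γ' : Path a b), range γ ⊆ U i → range γ' ⊆ U i → γ.Homotopic γ')
    (hpc : ∀ i j y, y ∈ U i ∩ U j → JoinedIn (U i ∩ U j) x₀ y)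
    (γ : Path x₀ x₀) : γ.Homotopic (Path.refl x₀) := by
  obtain ⟨t, t0, tm, ⟨N, hN⟩, ht⟩ := exists_monotone_Icc_subset_open_cover_unitInterval
    (c := fun i => γ ⁻¹' U i) (fun i => (hU i).preimage γ.continuous)
    (fun s _ => mem_iUnion.2 (hcov (γ s)))
  have h0 : γ 0 = x₀ := γ.source
  have key : ∀ k i, γ (t k) ∈ U i → ∃ δ : Path (γ 0) (γ (t k)), range δ ⊆ U i ∧
      (γ.subpath 0 (t k)).Homotopic δ := by
    intro k
    induction k with
    | zero =>
      intro i hi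
      rw [t0]
      refine ⟨Path.refl _, ?_, ?_⟩
      · rintro _ ⟨s, rfl⟩
        simpa using hx i
      · rw [Path.subpath_self]
    | succ k ih =>
      intro i hi
      obtain ⟨j, hj⟩ := ht k
      have hle : t k ≤ t (k+1) := tm (Nat.le_succ k)
      obtain ⟨δ, hδ, hh⟩ := ih j (hj ⟨le_rfl, hle⟩)
      have h1 : γ (t (k+1)) ∈ U j := hj ⟨hle, le_rfl⟩
      obtain ⟨ε, hε⟩ := hpc i j _ ⟨hi, h1⟩
      refine ⟨ε.cast h0 rfl, ?_, ?_⟩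
      · rintro _ ⟨s, rfl⟩
        exact (hε s).1
      · have e1 : (γ.subpath 0 (t (k+1))).Homotopic
            ((γ.subpath 0 (t k)).trans (γ.subpath (t k) (t (k+1)))) :=
          Path.Homotopic.symm ⟨Path.Homotopy.subpathTransSubpath γ 0 (t k) (t (k+1))⟩
        refine e1.trans ((Path.Homotopic.hcomp hh (Path.Homotopic.refl _)).trans ?_)
        apply hsc j
        · rw [Path.trans_range, union_subset_iff]
          refine ⟨hδ, ?_⟩
          rw [Path.range_subpath_of_le _ _ _ hle]
          rintro _ ⟨s, hs, rfl⟩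
          exact hj hs
        · rintro _ ⟨s, rfl⟩
          exact (hε s).2
  obtain ⟨i, -⟩ := hcov x₀
  have := key N i
  rw [hN N le_rfl] at this
  obtain ⟨δ, hδ, hh⟩ := this (by simpa using hx i)
  rw [Path.subpath_zero_one] at hh
  have h2 : (δ.cast h0.symm γ.target.symm).Homotopic (Path.refl x₀) := by
    apply hsc i
    · rintro _ ⟨s, rfl⟩
      exact hδ ⟨s, rfl⟩
    · rintro _ ⟨s, rfl⟩
      exact hx i
  exact Path.Homotopic.trans (hh.pathCast h0.symm γ.target.symm) h2

/-- retract -/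
theorem retract_paths {X E : Type*} [TopologicalSpace X] [TopologicalSpace E] [SimplyConnectedSpace E]
    (U : Set X) (φ : E → X) (ψ : X → E) (hφ : Continuous φ) (hψ : ContinuousOn ψ U)
    (h : ∀ x ∈ U, φ (ψ x) = x) (a b : X) (γ γ' : Path a b) (h1 : Set.range γ ⊆ U)
    (h2 : Set.range γ' ⊆ U) : γ.Homotopic γ' := by
  have ha : a ∈ U := h1 ⟨0, γ.source⟩
  have hb : b ∈ U := h1 ⟨1, γ.target⟩
  have := (SimplyConnectedSpace.paths_homotopic (γ.map' (hψ.mono h1)) (γ'.map' (hψ.mono h2))).map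
    ⟨φ, hφ⟩
  have := this.pathCast (h a ha).symm (h b hb).symm
  convert this using 1
  · ext s; exact (h _ (h1 ⟨s, rfl⟩)).symm
  · ext s; exact (h _ (h2 ⟨s, rfl⟩)).symm

namespace HQ

variable {n : ℕ}

theorem mem_iff (z : Fin n → ℂ) (hz : z ≠ 0) :
    Projectivization.mk ℂ z hz ∈ hyperquadric n ↔ z ⬝ᵥ z = 0 := by
  have e : ∀ z : Fin n → ℂ, ∑ i, z i ^ 2 = z ⬝ᵥ z := by
    intro z; simp [dotProduct, sq]
  constructor
  · rintro ⟨w, hw, h, h'⟩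
    rw [e] at h
    obtain ⟨c, hc⟩ := (Projectivization.mk_eq_mk_iff' ℂ _ _ hw hz).1 h'
    have hc0 : c ≠ 0 := by rintro rfl; exact hw (by simpa using hc.symm)
    rw [← hc] at h
    simpa [hc0] using h
  · intro h
    exact ⟨z, hz, (e z).trans h, rfl⟩

/-- Normalising representative with respect to `p`. -/
noncomputable def nrm (p : Fin n → ℂ) : ℙ ℂ (Fin n → ℂ) → (Fin n → ℂ) :=
  Projectivization.lift (fun v => ((v : Fin n → ℂ) ⬝ᵥ p)⁻¹ • (v : Fin n → ℂ)) (by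
    rintro ⟨v, hv⟩ ⟨w, hw⟩ t h
    simp only at h
    have ht : t ≠ 0 := by rintro rfl; exact hv (by simpa using h)
    simp only [h, smul_dotProduct, smul_eq_mul, smul_smul, mul_inv]
    congr 1
    field_simp)

theorem nrm_mk (p v : Fin n → ℂ) (hv : v ≠ 0) :
    nrm p (Projectivization.mk ℂ v hv) = (v ⬝ᵥ p)⁻¹ • v := rfl

/-- The chart domain attached to `p`. -/
def chart (p : Fin n → ℂ) : Set (ℙ ℂ (Fin n → ℂ)) := {x | nrm p x ≠ 0}

theorem mk_mem_chart (p v : Fin n → ℂ) (hv : v ≠ 0) :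
    Projectivization.mk ℂ v hv ∈ chart p ↔ v ⬝ᵥ p ≠ 0 := by
  simp [chart, nrm_mk, hv]

theorem quot_mk : Topology.IsQuotientMap
    (fun v : {v : Fin n → ℂ // v ≠ 0} => Projectivization.mk ℂ v.1 v.2) :=
  isQuotientMap_quot_mk

theorem dot_cont (p : Fin n → ℂ) : Continuous (fun v : Fin n → ℂ => v ⬝ᵥ p) := by
  unfold dotProduct; fun_prop

theorem isOpen_chart (p : Fin n → ℂ) : IsOpen (chart p) := by
  rw [← quot_mk.isOpen_preimage]
  have : (fun v : {v : Fin n → ℂ // v ≠ 0} => Projectivization.mk ℂ v.1 v.2) ⁻¹' chart p =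
      {v | v.1 ⬝ᵥ p ≠ 0} := by
    ext v; exact mk_mem_chart p v.1 v.2
  rw [this]
  exact isOpen_ne_fun ((dot_cont p).comp continuous_subtype_val) continuous_const

theorem continuousOn_nrm (p : Fin n → ℂ) : ContinuousOn (nrm p) (chart p) := by
  rw [quot_mk.continuousOn_isOpen_iff (isOpen_chart p)]
  have : ContinuousOn (fun v : {v : Fin n → ℂ // v ≠ 0} => (v.1 ⬝ᵥ p)⁻¹ • v.1)
      {v | v.1 ⬝ᵥ p ≠ 0} := by
    refine ContinuousOn.smul (ContinuousOn.inv₀ ?_ fun v hv => hv) continuous_subtype_val.continuousOn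
    exact ((dot_cont p).comp continuous_subtype_val).continuousOn
  exact this.mono fun v hv => (mk_mem_chart p v.1 v.2).1 hv

/-- Retraction of the ambient space to the normalised cone. -/
noncomputable def par (p q v : Fin n → ℂ) : Fin n → ℂ :=
  (v + (1 - v ⬝ᵥ p) • q) -
    ((v + (1 - v ⬝ᵥ p) • q) ⬝ᵥ (v + (1 - v ⬝ᵥ p) • q) / 2) • p

theorem par_cont (p q : Fin n → ℂ) : Continuous (par p q) := by
  unfold par dotProduct; fun_prop

theorem par_dot {p q : Fin n → ℂ} (hp : p ⬝ᵥ p = 0) (hq : q ⬝ᵥ p = 1) (v : Fin n → ℂ) :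
    par p q v ⬝ᵥ p = 1 := by
  simp [par, sub_dotProduct, add_dotProduct, hp, hq]

theorem par_self {p q : Fin n → ℂ} (hp : p ⬝ᵥ p = 0) (hq : q ⬝ᵥ p = 1) (v : Fin n → ℂ) :
    par p q v ⬝ᵥ par p q v = 0 := by
  unfold par
  have h : (v + (1 - v ⬝ᵥ p) • q) ⬝ᵥ p = 1 := by simp [add_dotProduct, hq]
  generalize v + (1 - v ⬝ᵥ p) • q = u at *
  simp only [sub_dotProduct, dotProduct_sub, smul_dotProduct, dotProduct_smul, smul_eq_mul, hp, h,
    dotProduct_comm p u]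
  ring

theorem par_of {p v : Fin n → ℂ} (q : Fin n → ℂ) (h : v ⬝ᵥ p = 1) :
    par p q v = v - (v ⬝ᵥ v / 2) • p := by
  simp [par, h]

theorem par_ne {p q : Fin n → ℂ} (hp : p ⬝ᵥ p = 0) (hq : q ⬝ᵥ p = 1) (v : Fin n → ℂ) :
    par p q v ≠ 0 := by
  intro h
  have := par_dot hp hq v
  simp [h] at this

/-- The parametrisation of the chart. -/
noncomputable def phi {p q : Fin n → ℂ} (hp : p ⬝ᵥ p = 0) (hq : q ⬝ᵥ p = 1) (v : Fin n → ℂ) :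
    hyperquadric n :=
  ⟨Projectivization.mk ℂ (par p q v) (par_ne hp hq v), (mem_iff _ _).2 (par_self hp hq v)⟩

theorem phi_cont {p q : Fin n → ℂ} (hp : p ⬝ᵥ p = 0) (hq : q ⬝ᵥ p = 1) :
    Continuous (phi hp hq) := by
  refine Continuous.subtype_mk ?_ _
  exact quot_mk.continuous.comp ((par_cont p q).subtype_mk (par_ne hp hq))

theorem phi_nrm {p q : Fin n → ℂ} (hp : p ⬝ᵥ p = 0) (hq : q ⬝ᵥ p = 1) (x : hyperquadric n)
    (hx : x.1 ∈ chart p) : phi hp hq (nrm p x.1) = x ∧ nrm p x.1 ⬝ᵥ p = 1 := by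
  obtain ⟨x, hxQ⟩ := x
  induction x with
  | h v hv =>
    have h1 := (mk_mem_chart p v hv).1 hx
    have h2 := (mem_iff v hv).1 hxQ
    have h3 : ((v ⬝ᵥ p)⁻¹ • v) ⬝ᵥ p = 1 := by simp [h1]
    refine ⟨Subtype.ext ?_, h3⟩
    simp only [phi, nrm_mk]
    rw [Projectivization.mk_eq_mk_iff']
    refine ⟨(v ⬝ᵥ p)⁻¹, ?_⟩
    rw [par_of q h3]
    simp [h2]

open scoped ComplexOrder in
theorem exists_q {p : Fin n → ℂ} (hp : p ≠ 0) : ∃ q : Fin n → ℂ, q ⬝ᵥ p = 1 := by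
  have : star p ⬝ᵥ p ≠ 0 := by simpa using hp
  exact ⟨(star p ⬝ᵥ p)⁻¹ • star p, by simp [this]⟩

theorem joinedIn_chart {p p' : Fin n → ℂ} (hp0 : p ≠ 0) (hp : p ⬝ᵥ p = 0)
    (a b : hyperquadric n) (ha : a.1 ∈ chart p ∩ chart p') (hb : b.1 ∈ chart p ∩ chart p') :
    JoinedIn ((↑) ⁻¹' (chart p) ∩ (↑) ⁻¹' (chart p') : Set (hyperquadric n)) a b := by
  obtain ⟨q, hq⟩ := exists_q hp0
  obtain ⟨ea, ha1⟩ := phi_nrm hp hq a ha.1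
  obtain ⟨eb, hb1⟩ := phi_nrm hp hq b hb.1
  set va := nrm p a.1
  set vb := nrm p b.1
  let g : ℂ → (Fin n → ℂ) := fun t => va + t • (vb - va)
  have hg : Continuous g := by fun_prop
  have hg1 : ∀ t, g t ⬝ᵥ p = 1 := by
    intro t; simp [g, add_dotProduct, sub_dotProduct, ha1, hb1]
  have g0 : g 0 = va := by simp [g]
  have g1 : g 1 = vb := by simp [g]
  have hmem : ∀ t, (phi hp hq (g t)).1 ∈ chart p' ↔ par p q (g t) ⬝ᵥ p' ≠ 0 := fun t =>
    mk_mem_chart _ _ _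
  let S : Set ℂ := {t | par p q (g t) ⬝ᵥ p' = 0}
  have h0 : (0 : ℂ) ∈ Sᶜ := by
    refine (hmem 0).1 ?_
    rw [g0, ea]; exact ha.2
  have h1 : (1 : ℂ) ∈ Sᶜ := by
    refine (hmem 1).1 ?_
    rw [g1, eb]; exact hb.2
  have hpoly : ∃ P : Polynomial ℂ, ∀ t, par p q (g t) ⬝ᵥ p' = P.eval t := by
    let d := vb - va
    refine ⟨Polynomial.C (va ⬝ᵥ p') + Polynomial.X * Polynomial.C (d ⬝ᵥ p')
      - Polynomial.C (p ⬝ᵥ p' / 2) * (Polynomial.C (va ⬝ᵥ va)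
        + Polynomial.X * Polynomial.C (2 * va ⬝ᵥ d) + Polynomial.X ^ 2 * Polynomial.C (d ⬝ᵥ d)), ?_⟩
    intro t
    rw [par_of q (hg1 t)]
    have : g t = va + t • d := rfl
    rw [this]
    simp only [sub_dotProduct, add_dotProduct, dotProduct_add, smul_dotProduct, dotProduct_smul,
      smul_eq_mul, dotProduct_comm d va, Polynomial.eval_add, Polynomial.eval_sub,
      Polynomial.eval_mul, Polynomial.eval_C, Polynomial.eval_X, Polynomial.eval_pow]
    ring
  obtain ⟨P, hP⟩ := hpoly
  have hfin : S.Countable := by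
    have hP0 : P ≠ 0 := by
      rintro rfl
      exact h0 ((hP 0).trans (by simp))
    refine Set.Finite.countable ((P.roots.toFinset.finite_toSet).subset ?_)
    intro t ht
    have : P.eval t = 0 := (hP t).symm.trans ht
    simp [hP0, this]
  have hpath : IsPathConnected Sᶜ := hfin.isPathConnected_compl_of_one_lt_rank (by
    rw [Complex.rank_real_complex]; norm_num)
  obtain ⟨γ, hγ⟩ := hpath.joinedIn 0 h0 1 h1
  have hc : Continuous (fun t => phi hp hq (g t)) := (phi_cont hp hq).comp hg
  refine ⟨(γ.map hc).cast ?_ ?_, ?_⟩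
  · rw [g0, ea]
  · rw [g1, eb]
  · intro s
    refine ⟨?_, ?_⟩
    · change (phi hp hq (g (γ s))).1 ∈ chart p
      refine (mk_mem_chart _ _ _).2 ?_
      rw [par_dot hp hq]; exact one_ne_zero
    · exact (hmem (γ s)).2 (hγ s)

theorem exists_nonisotropic (hn : 3 ≤ n) {x : Fin n → ℂ} (hx : x ≠ 0) :
    ∃ u : Fin n → ℂ, u ⬝ᵥ x = 0 ∧ u ⬝ᵥ u ≠ 0 := by
  have : ∃ i j, i ≠ j ∧ x i ^ 2 + x j ^ 2 ≠ 0 := by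
    by_contra! hc
    apply hx
    ext i
    obtain ⟨j, hj⟩ : ∃ j, j ∉ ({i} : Finset (Fin n)) := by
      by_contra! h
      have := Finset.card_le_card (fun a _ => h a : (Finset.univ : Finset (Fin n)) ⊆ {i})
      simp at this; omega
    obtain ⟨k, hk⟩ : ∃ k, k ∉ ({i, j} : Finset (Fin n)) := by
      by_contra! h
      have := Finset.card_le_card (fun a _ => h a : (Finset.univ : Finset (Fin n)) ⊆ {i, j})
      have h2 := Finset.card_le_two (a := i) (b := j)
      simp at this; omega
    simp only [Finset.mem_insert, Finset.mem_singleton, not_or] at hj hk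
    have e1 := hc i j (Ne.symm hj)
    have e2 := hc j k (Ne.symm hk.2)
    have e3 := hc i k (Ne.symm hk.1)
    have : x i ^ 2 = 0 := by linear_combination (e1 - e2 + e3) / 2
    simpa using this
  obtain ⟨i, j, hij, h⟩ := this
  refine ⟨Pi.single i (x j) - Pi.single j (x i), ?_, ?_⟩
  · simp [sub_dotProduct, mul_comm]
  · have : (Pi.single i (x j) - Pi.single j (x i) : Fin n → ℂ) ⬝ᵥ
        (Pi.single i (x j) - Pi.single j (x i)) = x i ^ 2 + x j ^ 2 := by
      simp [sub_dotProduct, hij, hij.symm]; ring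
    rw [this]; exact h

open scoped ComplexOrder in
theorem exists_common (hn : 3 ≤ n) {x y : Fin n → ℂ} (hx : x ≠ 0) (hy : y ≠ 0)
    (hxx : x ⬝ᵥ x = 0) (hyy : y ⬝ᵥ y = 0) :
    ∃ p : Fin n → ℂ, p ≠ 0 ∧ p ⬝ᵥ p = 0 ∧ x ⬝ᵥ p ≠ 0 ∧ y ⬝ᵥ p ≠ 0 := by
  suffices h : ∃ p : Fin n → ℂ, p ⬝ᵥ p = 0 ∧ x ⬝ᵥ p ≠ 0 ∧ y ⬝ᵥ p ≠ 0 by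
    obtain ⟨p, h1, h2, h3⟩ := h
    exact ⟨p, by rintro rfl; simp at h2, h1, h2, h3⟩
  have sx : star x ⬝ᵥ star x = 0 := by rw [Matrix.star_dotProduct_star]; simp [hxx]
  have sy : star y ⬝ᵥ star y = 0 := by rw [Matrix.star_dotProduct_star]; simp [hyy]
  have nx : x ⬝ᵥ star x ≠ 0 := by simpa using hx
  have ny : y ⬝ᵥ star y ≠ 0 := by simpa using hy
  by_cases hb : x ⬝ᵥ y = 0
  · by_cases hc : y ⬝ᵥ star x = 0
    · have hc' : x ⬝ᵥ star y = 0 := by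
        have := congrArg star hc
        rw [← Matrix.dotProduct_star] at this
        simpa [dotProduct_comm] using this
      have sb : star x ⬝ᵥ star y = 0 := by
        rw [dotProduct_comm, Matrix.star_dotProduct_star]; simp [hb]
      refine ⟨star x + star y, ?_, ?_, ?_⟩
      · simp [dotProduct_add, add_dotProduct, sx, sy, sb, dotProduct_comm (star y) (star x)]
      · rw [dotProduct_add, hc', add_zero]; exact nx
      · rw [dotProduct_add, hc, zero_add]; exact ny
    · exact ⟨star x, sx, nx, hc⟩
  · obtain ⟨u, hu, huu⟩ := exists_nonisotropic hn hx
    set β := x ⬝ᵥ y with hβ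
    have hv : (β⁻¹ • y + u) ⬝ᵥ x = 1 := by
      rw [add_dotProduct, hu, smul_dotProduct, dotProduct_comm y x, ← hβ]; simp [hb]
    obtain ⟨q, hq⟩ := exists_q hx
    refine ⟨par x q (β⁻¹ • y + u), par_self hxx hq _, ?_, ?_⟩
    · rw [dotProduct_comm, par_dot hxx hq]; exact one_ne_zero
    · rw [par_of q hv, dotProduct_comm]
      have : (β⁻¹ • y + u - ((β⁻¹ • y + u) ⬝ᵥ (β⁻¹ • y + u) / 2) • x) ⬝ᵥ y = - (u ⬝ᵥ u * β / 2) := by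
        simp only [sub_dotProduct, add_dotProduct, dotProduct_add, smul_dotProduct, dotProduct_smul,
          smul_eq_mul, hyy, dotProduct_comm y u, ← hβ]
        field_simp
        ring
      rw [this]
      simp [huu, hb]

theorem exists_chart (hn : 3 ≤ n) (x y : hyperquadric n) :
    ∃ p : Fin n → ℂ, p ≠ 0 ∧ p ⬝ᵥ p = 0 ∧ x.1 ∈ chart p ∧ y.1 ∈ chart p := by
  obtain ⟨x, hx⟩ := x
  obtain ⟨y, hy⟩ := y
  induction x with
  | h v hv =>
  induction y with
  | h w hw =>
    obtain ⟨p, h1, h2, h3, h4⟩ := exists_common hn hv hw ((mem_iff _ _).1 hx) ((mem_iff _ _).1 hy)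
    exact ⟨p, h1, h2, (mk_mem_chart _ _ _).2 h3, (mk_mem_chart _ _ _).2 h4⟩

end HQ

/-- For every `n ≥ 3` the hyperquadric `𝐐^{n-2} ⊂ ℂℙ^{n-1}`, with the
subspace topology, is nonempty, path connected, and simply connected. -/
theorem statement8 (n : ℕ) (hn : 3 ≤ n) :
    Nonempty (hyperquadric n) ∧ PathConnectedSpace (hyperquadric n) ∧
      SimplyConnectedSpace (hyperquadric n) := by
  have hne : Nonempty (hyperquadric n) := by
    let i : Fin n := ⟨0, by omega⟩
    let j : Fin n := ⟨1, by omega⟩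
    have hij : i ≠ j := by simp [i, j]
    let z : Fin n → ℂ := Pi.single i 1 + Pi.single j Complex.I
    have hz : z ≠ 0 := by
      intro h
      have := congrFun h i
      simp [z, hij] at this
    refine ⟨⟨Projectivization.mk ℂ z hz, (HQ.mem_iff z hz).2 ?_⟩⟩
    simp [z, add_dotProduct, hij, hij.symm]
  have hpc : PathConnectedSpace (hyperquadric n) := by
    refine ⟨hne, fun x y => ?_⟩
    obtain ⟨p, h1, h2, hx, hy⟩ := HQ.exists_chart hn x y
    exact (HQ.joinedIn_chart h1 h2 x y ⟨hx, hx⟩ ⟨hy, hy⟩).joined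
  refine ⟨hne, hpc, simply_connected_iff_loops_nullhomotopic.2 ⟨hpc, fun x₀ γ => ?_⟩⟩
  refine vk_loops (ι := {p : Fin n → ℂ // p ≠ 0 ∧ p ⬝ᵥ p = 0 ∧ x₀.1 ∈ HQ.chart p})
    (fun p => (↑) ⁻¹' HQ.chart p.1) x₀ ?_ ?_ ?_ ?_ ?_ γ
  · exact fun p => (HQ.isOpen_chart p.1).preimage continuous_subtype_val
  · exact fun p => p.2.2.2
  · intro x
    obtain ⟨p, h1, h2, hx, hy⟩ := HQ.exists_chart hn x₀ x
    exact ⟨⟨p, h1, h2, hx⟩, hy⟩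
  · rintro ⟨p, h1, h2, hx⟩ a b γ γ' hγ hγ'
    obtain ⟨q, hq⟩ := HQ.exists_q h1
    refine retract_paths _ (HQ.phi h2 hq) (fun x => HQ.nrm p x.1) (HQ.phi_cont h2 hq) ?_ ?_
      a b γ γ' hγ hγ'
    · exact (HQ.continuousOn_nrm p).comp continuous_subtype_val.continuousOn fun x hx => hx
    · exact fun x hx => (HQ.phi_nrm h2 hq x hx).1
  · rintro ⟨p, h1, h2, hx⟩ ⟨p', h1', h2', hx'⟩ y hy
    exact HQ.joinedIn_chart h1 h2 x₀ y ⟨hx, hx'⟩ hy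
end
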